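/- arXiv:1811.07837 — 7 statements merged into one kernel-verified Lean document; each statement's English description precedes it below -/
import Mathlib

section
/- Let n ≥ 1 and let K : ℝ^{n+1} → ℝ be an odd Calderón–Zygmund kernel of homogeneity −n: K(x) = Ω(x)/|x|^n with Ω homogeneous of degree 0, K of class C² on ℝ^{n+1}∖{0} and |∇^j K(x)| ≤ C/|x|^{n+j} for j = 0,1,2 and x ≠ 0. Let A : ℝ^n → ℝ be a C¹ function with ‖∇A‖_∞ ≤ 1/10, let Γ = {(z, A(z)) : z ∈ ℝ^n} ⊂ ℝ^{n+1}, let μ = H^n|_Γ, and for x ∈ Γ let N_x denote a unit normal to Γ at x. Let g : ℝ^{n+1} → ℝ be a C¹ function with compact support, and fix a ∈ (0,1) and b ∈ (0,a). Then for every x ∈ Γ at which pv T(gμ)(x) exists, lim_{X_a(x,N_x) ∋ y → x} ½(T_{b|x−y|}(gμ)(y) + T_{b|x−y|}(gμ)(2x−y)) = pv T(gμ)(x). -/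
open MeasureTheory Metric Filter Set
open scoped ENNReal NNReal Topology RealInnerProductSpace

noncomputable section

/-- The one-sided open cone `X_a(x,u)` with vertex `x`, axis `u` and aperture `a`. -/
def cone {n : ℕ} (a : ℝ) (x u : EuclideanSpace ℝ (Fin (n + 1))) :
    Set (EuclideanSpace ℝ (Fin (n + 1))) :=
  {y | a * ‖y - x‖ < ⟪y - x, u⟫}

/-- The truncated singular integral of the measure `g μ`:
`T_ε(gμ)(y) = ∫_{|y-z|>ε} K(y-z) g(z) dμ(z)`. -/
def TepsDen {n : ℕ} (K : EuclideanSpace ℝ (Fin (n + 1)) → ℝ)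
    (μ : Measure (EuclideanSpace ℝ (Fin (n + 1))))
    (g : EuclideanSpace ℝ (Fin (n + 1)) → ℝ) (ε : ℝ)
    (y : EuclideanSpace ℝ (Fin (n + 1))) : ℝ :=
  ∫ z, (if ε < dist y z then K (y - z) * g z else 0) ∂μ

/-- The map `z ↦ (z, A z)` parametrizing the graph of `A : ℝⁿ → ℝ`. -/
def graphMap {n : ℕ} (A : EuclideanSpace ℝ (Fin n) → ℝ) (z : EuclideanSpace ℝ (Fin n)) :
    EuclideanSpace ℝ (Fin (n + 1)) :=
  WithLp.toLp 2 (Fin.snoc (α := fun _ => ℝ) (WithLp.ofLp z) (A z))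

/-- The constant `C_K(N)` appearing in the jump formulas: an integral over the
hyperplane through the origin orthogonal to `N`. -/
def CK (n : ℕ) (Ω : EuclideanSpace ℝ (Fin (n + 1)) → ℝ)
    (N : EuclideanSpace ℝ (Fin (n + 1))) : ℝ :=
  ∫ y in {y : EuclideanSpace ℝ (Fin (n + 1)) | ⟪y, N⟫ = 0},
    (Ω (y + N) - Ω (y - N)) / (2 * (‖y‖ ^ 2 + 1) ^ ((n : ℝ) / 2)) ∂μH[n]

/-!
Put `r = |x - y|` and `ω = (y - x) / r`, and dilate `Γ` about `x` by the factor `1 / r`. Since `K`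
is homogeneous of degree `-n`, the half sum minus `T_r(gμ)(x)` becomes the integral over the dilated
graph of the kernel `q ↦ (K_b(ω - q) + K_b(-ω - q)) / 2 - K_1(-q)`, where `K_ε` is `K` cut off to
zero on the ball of radius `ε`. This kernel is odd in `q`. For large `q` it is an average of
differences of `K`, hence `O(|q| ^ (-n - 1))`, which is integrable in dimension `n`.

As `r → 0` the dilated graph tends to the tangent plane. The density of the surface measure in the
parameter of the graph is bounded and continuous at the point below `x`, because near that point the
graph map is bi-Lipschitz to its derivative with constants close to `1`. Nontangentiality keeps `±ω`
at distance at least `a > b` from the tangent plane, so that the jump of `K_b` is never met there.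
By dominated convergence the integral is therefore asymptotic to a multiple of the integral of the
odd kernel over the tangent plane, which vanishes. Finally `T_r(gμ)(x)` tends to `pv T(gμ)(x)`.
-/

section DensityAtPoint

variable {X Y : Type*}

theorem exists_mem_tendsto_inf_principal {l L : Filter X} {m : Filter Y} [CountableInterFilter L]
    [m.IsCountablyGenerated] {f : X → Y} (hf : Tendsto f (l ⊓ L) m) :
    ∃ t ∈ L, Tendsto f (l ⊓ 𝓟 t) m := by
  obtain ⟨V, hV⟩ := m.exists_antitone_basis
  have hsplit (k : ℕ) : ∃ s ∈ l, ∃ t ∈ L, f ⁻¹' V k = s ∩ t :=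
    mem_inf_iff.1 (hf (hV.mem k))
  choose s hs t ht hst using hsplit
  refine ⟨⋂ k, t k, countable_iInter_mem.2 ht, hV.tendsto_right_iff.2 fun k _ ↦ ?_⟩
  rw [eventually_inf_principal]
  filter_upwards [hs k] with x hxs hxt
  have hx : x ∈ f ⁻¹' V k := hst k ▸ ⟨hxs, mem_iInter.1 hxt k⟩
  exact hx

theorem tendsto_nhds_of_eventually_le_mul {l : Filter X} {f : X → ℝ≥0∞} {J : ℝ≥0}
    (h : ∀ c : ℝ≥0, 1 < c → ∀ᶠ x in l, f x ≤ c * J ∧ J ≤ c * f x) : Tendsto f l (𝓝 J) := by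
  have hscale {a : ℝ≥0∞} (ha : a ≠ ∞) :
      Tendsto (fun c : ℝ≥0 ↦ (c : ℝ≥0∞) * a) (𝓝[>] 1) (𝓝 a) := by
    have := ENNReal.Tendsto.mul_const (b := a)
      (ENNReal.tendsto_coe.2 (tendsto_id (x := 𝓝 (1 : ℝ≥0)))) (Or.inr ha)
    simp only [ENNReal.coe_one, one_mul] at this
    exact this.mono_left nhdsWithin_le_nhds
  refine tendsto_order.2 ⟨fun a ha ↦ ?_, fun a ha ↦ ?_⟩
  · obtain ⟨c, hca, hc⟩ := (((hscale ha.ne_top).eventually_lt_const ha).and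
      self_mem_nhdsWithin).exists
    filter_upwards [h c hc] with x hx
    by_contra! hxa
    exact (hx.2.trans (mul_le_mul_right hxa _)).not_gt hca
  · obtain ⟨c, hca, hc⟩ := (((hscale ENNReal.coe_ne_top).eventually_lt_const ha).and
      self_mem_nhdsWithin).exists
    exact (h c hc).mono fun x hx ↦ hx.1.trans_lt hca

theorem ae_restrict_le_of_setLIntegral_le [MeasurableSpace X] {lam : Measure X} [SigmaFinite lam]
    {f g : X → ℝ≥0∞} (hf : Measurable f) {U : Set X}
    (h : ∀ s ⊆ U, MeasurableSet s → ∫⁻ x in s, f x ∂lam ≤ ∫⁻ x in s, g x ∂lam)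
    (hU : MeasurableSet U) : f ≤ᵐ[lam.restrict U] g := by
  refine ae_le_of_forall_setLIntegral_le_of_sigmaFinite hf fun s hs _ ↦ ?_
  rw [Measure.restrict_restrict hs]
  exact h _ inter_subset_right (hs.inter hU)

theorem rnDeriv_tendsto_of_eventually_le_mul [TopologicalSpace X] [MeasurableSpace X]
    [OpensMeasurableSpace X] {lam ν : Measure X} [SigmaFinite lam] [SigmaFinite ν]
    (hac : ν ≪ lam) {J : ℝ≥0} {z : X}
    (hJ : ∀ c : ℝ≥0, 1 < c →
      ∀ᶠ s in (𝓝 z).smallSets, ν s ≤ c * (J * lam s) ∧ J * lam s ≤ c * ν s) :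
    Tendsto (ν.rnDeriv lam) (𝓝 z ⊓ ae lam) (𝓝 J) := by
  refine tendsto_nhds_of_eventually_le_mul fun c hc ↦ ?_
  obtain ⟨V, hV, hVJ⟩ := eventually_smallSets.1 (hJ c hc)
  obtain ⟨U, hUV, hU, hzU⟩ := mem_nhds_iff.1 hV
  have hf : Measurable (ν.rnDeriv lam) := Measure.measurable_rnDeriv ν lam
  have hint (s : Set X) : ∫⁻ x in s, ν.rnDeriv lam x ∂lam = ν s :=
    Measure.setLIntegral_rnDeriv hac s
  have hupper : ν.rnDeriv lam ≤ᵐ[lam.restrict U] fun _ ↦ c * J :=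
    ae_restrict_le_of_setLIntegral_le hf (fun s hs _ ↦ by
      rw [hint, setLIntegral_const, mul_assoc]
      exact (hVJ s (hs.trans hUV)).1) hU.measurableSet
  have hlower : (fun _ ↦ (J : ℝ≥0∞)) ≤ᵐ[lam.restrict U] fun x ↦ c * ν.rnDeriv lam x :=
    ae_restrict_le_of_setLIntegral_le measurable_const (fun s hs _ ↦ by
      rw [lintegral_const_mul _ hf, hint, setLIntegral_const]
      exact (hVJ s (hs.trans hUV)).2) hU.measurableSet
  have hle : 𝓝 z ⊓ ae lam ≤ ae (lam.restrict U) := by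
    rw [ae_restrict_eq hU.measurableSet, inf_comm]
    exact inf_le_inf_left _ (le_principal_iff.2 (hU.mem_nhds hzU))
  exact (hupper.and hlower).filter_mono hle

theorem exists_bounded_density_tendsto [TopologicalSpace X] [MeasurableSpace X]
    [OpensMeasurableSpace X] {lam ν : Measure X} [SigmaFinite lam] {B J : ℝ≥0} {z : X}
    (hB : ν ≤ B • lam)
    (hJ : ∀ c : ℝ≥0, 1 < c →
      ∀ᶠ s in (𝓝 z).smallSets, ν s ≤ c * (J * lam s) ∧ J * lam s ≤ c * ν s) :
    ∃ h : X → ℝ≥0, AEMeasurable h lam ∧ (∀ x, h x ≤ max B J) ∧ Tendsto h (𝓝 z) (𝓝 J) ∧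
      ν = lam.withDensity (fun x ↦ (h x : ℝ≥0∞)) := by
  classical
  have : SigmaFinite ν := Measure.sigmaFinite_of_le _ hB
  have hac : ν ≪ lam := (Measure.absolutelyContinuous_of_le hB).trans
    Measure.smul_absolutelyContinuous
  have hf : Measurable (ν.rnDeriv lam) := Measure.measurable_rnDeriv ν lam
  have hfB : ∀ᵐ x ∂lam, ν.rnDeriv lam x ≤ B := by
    refine ae_le_of_forall_setLIntegral_le_of_sigmaFinite hf fun s _ _ ↦ ?_
    rw [Measure.setLIntegral_rnDeriv hac, setLIntegral_const]
    exact hB s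
  obtain ⟨t, ht, hft⟩ :=
    exists_mem_tendsto_inf_principal (rnDeriv_tendsto_of_eventually_le_mul hac hJ)
  set t' := t ∩ {x | ν.rnDeriv lam x ≤ B}
  have ht' : t' ∈ ae lam := inter_mem ht hfB
  set h : X → ℝ≥0 := t'.piecewise (fun x ↦ (ν.rnDeriv lam x).toNNReal) fun _ ↦ J
  have hae : h =ᵐ[lam] fun x ↦ (ν.rnDeriv lam x).toNNReal := by
    filter_upwards [ht'] with x hx using piecewise_eq_of_mem _ _ _ hx
  refine ⟨h, hf.ennreal_toNNReal.aemeasurable.congr hae.symm, fun x ↦ ?_, ?_, ?_⟩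
  · by_cases hx : x ∈ t'
    · simp only [h, piecewise_eq_of_mem _ _ _ hx]
      exact le_max_of_le_left (by simpa using ENNReal.toNNReal_mono ENNReal.coe_ne_top hx.2)
    · simp only [h, piecewise_eq_of_notMem _ _ _ hx, le_max_right]
  · refine Tendsto.piecewise ?_ tendsto_const_nhds
    exact (ENNReal.tendsto_toNNReal ENNReal.coe_ne_top).comp
      (hft.mono_left (inf_le_inf_left _ (principal_mono.2 inter_subset_left)))
  · rw [← Measure.withDensity_rnDeriv_eq _ _ hac]
    refine withDensity_congr_ae ?_
    filter_upwards [hae, hfB] with x hx hxB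
    rw [hx, ENNReal.coe_toNNReal (hxB.trans_lt ENNReal.coe_lt_top).ne]

end DensityAtPoint

section SurfaceMeasure

theorem hausdorffMeasure_image_le_of_dist_le {X Y Z : Type*} [MetricSpace Y] [MeasurableSpace Y]
    [BorelSpace Y] [MetricSpace Z] [MeasurableSpace Z] [BorelSpace Z] {f : X → Y} {g : X → Z}
    {k : ℝ≥0} {d : ℝ} (hd : 0 ≤ d) {s : Set X}
    (h : ∀ u ∈ s, ∀ v ∈ s, dist (f u) (f v) ≤ k * dist (g u) (g v)) :
    μH[d] (f '' s) ≤ (k : ℝ≥0∞) ^ d * μH[d] (g '' s) := by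
  rcases s.eq_empty_or_nonempty with rfl | ⟨u₀, -⟩
  · simp
  have : Nonempty X := ⟨u₀⟩
  set i := Function.invFunOn g s
  have hi {u : X} (hu : u ∈ s) : i (g u) ∈ s ∧ g (i (g u)) = g u :=
    Function.invFunOn_pos ⟨u, hu, rfl⟩
  have hlip : LipschitzOnWith k (f ∘ i) (g '' s) := by
    refine LipschitzOnWith.of_dist_le_mul ?_
    rintro _ ⟨u, hu, rfl⟩ _ ⟨v, hv, rfl⟩
    simpa only [Function.comp_apply, (hi hu).2, (hi hv).2] using h _ (hi hu).1 _ (hi hv).1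
  have hfi {u : X} (hu : u ∈ s) : f (i (g u)) = f u := by
    have := h _ (hi hu).1 u hu
    rwa [(hi hu).2, dist_self, mul_zero, dist_le_zero] at this
  have himage : (f ∘ i) '' (g '' s) = f '' s := by
    rw [image_image]
    exact image_congr fun u hu ↦ hfi hu
  simpa only [himage] using hlip.hausdorffMeasure_image_le hd

theorem isFiniteMeasureOnCompacts_restrict_range {E F : Type*} [NormedAddCommGroup E]
    [NormedSpace ℝ E] [FiniteDimensional ℝ E] [MeasurableSpace E] [BorelSpace E] [MetricSpace F]
    [MeasurableSpace F] [BorelSpace F] {G : E → F} {κ Λ : ℝ≥0} (hGΛ : LipschitzWith Λ G)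
    (hG : AntilipschitzWith κ G) : IsFiniteMeasureOnCompacts
      ((μH[Module.finrank ℝ E] : Measure F).restrict (range G)) := by
  refine ⟨fun s hs ↦ ?_⟩
  have hcompact : IsCompact (G ⁻¹' s) :=
    (hG.isClosedEmbedding hGΛ.uniformContinuous).isCompact_preimage hs
  rw [Measure.restrict_apply hs.measurableSet, ← image_preimage_eq_inter_range]
  exact (hGΛ.hausdorffMeasure_image_le (Nat.cast_nonneg _) _).trans_lt
    (ENNReal.mul_lt_top (by finiteness) hcompact.measure_lt_top)

theorem exists_one_lt_rpow_le {d : ℝ} (hd : 0 ≤ d) {c : ℝ≥0} (hc : 1 < c) :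
    ∃ k : ℝ≥0, 1 < k ∧ (k : ℝ≥0∞) ^ d ≤ c := by
  have hlim : Tendsto (fun k : ℝ≥0 ↦ k ^ d) (𝓝[>] 1) (𝓝 1) := by
    simpa using ((NNReal.continuousAt_rpow_const (y := d) (Or.inr hd) (x := 1)).tendsto).mono_left
      nhdsWithin_le_nhds
  obtain ⟨k, hkc, hk⟩ := ((hlim.eventually_lt_const hc).and self_mem_nhdsWithin).exists
  refine ⟨k, hk, ?_⟩
  rw [← ENNReal.coe_rpow_of_nonneg _ hd]
  exact_mod_cast hkc.le

variable {E F : Type*} [NormedAddCommGroup E] [NormedSpace ℝ E] [NormedAddCommGroup F]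
  [NormedSpace ℝ F] {G : E → F} {L : E →L[ℝ] F} {κ Λ : ℝ≥0} {z : E}

/-- The rescaling `v ↦ (G (z + r v) - G z) / r` of a map `G` around the point `z`, which converges
to the derivative of `G` at `z` as `r → 0`. -/
def blowup (G : E → F) (z : E) (r : ℝ) (v : E) : F :=
  r⁻¹ • (G (z + r • v) - G z)

theorem smul_blowup {r : ℝ} (hr : r ≠ 0) (v : E) : r • blowup G z r v = G (z + r • v) - G z := by
  rw [blowup, smul_inv_smul₀ hr]

theorem continuous_blowup (hG : Continuous G) (r : ℝ) : Continuous (blowup G z r) := by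
  unfold blowup
  fun_prop

theorem norm_le_mul_norm_blowup (hG : AntilipschitzWith κ G) {r : ℝ} (hr : 0 < r) (v : E) :
    ‖v‖ ≤ κ * ‖blowup G z r v‖ := by
  have h := hG.le_mul_dist (z + r • v) z
  rw [dist_eq_norm, dist_eq_norm, add_sub_cancel_left, ← smul_blowup hr.ne', norm_smul, norm_smul,
    Real.norm_of_nonneg hr.le, mul_left_comm] at h
  exact le_of_mul_le_mul_left h hr

theorem tendsto_blowup (hL : HasFDerivAt G L z) (v : E) :
    Tendsto (fun r ↦ blowup G z r v) (𝓝[>] 0) (𝓝 (L v)) :=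
  (hL.hasLineDerivAt v).tendsto_slope_zero_right

theorem norm_le_mul_norm_of_hasFDerivAt (hG : AntilipschitzWith κ G) (hL : HasFDerivAt G L z)
    (v : E) : ‖v‖ ≤ κ * ‖L v‖ :=
  ge_of_tendsto ((tendsto_blowup hL v).norm.const_mul _) <| by
    filter_upwards [self_mem_nhdsWithin] with r hr using norm_le_mul_norm_blowup hG hr v

theorem dist_le_one_add_mul_dist_of_approximatesLinearOn {s : Set E} {η : ℝ≥0}
    (hG : AntilipschitzWith κ G) (hL : ∀ v, ‖v‖ ≤ κ * ‖L v‖) (h : ApproximatesLinearOn G L s η)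
    {u v : E} (hu : u ∈ s) (hv : v ∈ s) :
    dist (G u) (G v) ≤ (1 + η * κ) * dist (L u) (L v) ∧
      dist (L u) (L v) ≤ (1 + η * κ) * dist (G u) (G v) := by
  have herr := h u hu v hv
  have hηG := mul_le_mul_of_nonneg_left (hG.le_mul_dist u v) η.coe_nonneg
  have hηL := mul_le_mul_of_nonneg_left (hL (u - v)) η.coe_nonneg
  have hGL := norm_le_norm_add_norm_sub' (G u - G v) (L (u - v))
  have hLG := norm_le_norm_add_norm_sub (G u - G v) (L (u - v))
  simp only [dist_eq_norm, ← map_sub] at hηG ⊢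
  constructor <;> linarith

theorem eventually_hausdorffMeasure_image_le [MeasurableSpace F] [BorelSpace F]
    (hG : AntilipschitzWith κ G) (hL : HasStrictFDerivAt G L z) {d : ℝ} (hd : 0 ≤ d) {c : ℝ≥0}
    (hc : 1 < c) : ∀ᶠ s in (𝓝 z).smallSets,
      μH[d] (G '' s) ≤ c * μH[d] (L '' s) ∧ μH[d] (L '' s) ≤ c * μH[d] (G '' s) := by
  obtain ⟨k, hk, hkc⟩ := exists_one_lt_rpow_le hd hc
  obtain ⟨η, hη, hηk⟩ : ∃ η : ℝ≥0, 0 < η ∧ η * κ ≤ k - 1 := by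
    refine ⟨(k - 1) / (κ + 1), by have := tsub_pos_of_lt hk; positivity, ?_⟩
    rw [div_mul_eq_mul_div, div_le_iff₀ (by positivity)]
    gcongr
    exact le_self_add
  have hηk' : (1 + η * κ : ℝ) ≤ k := by
    have : 1 + η * κ ≤ k := by simpa [add_tsub_cancel_of_le hk.le] using add_le_add_right hηk 1
    exact_mod_cast this
  obtain ⟨t, ht, happrox⟩ := hL.approximates_deriv_on_nhds (Or.inr hη)
  refine eventually_smallSets.2 ⟨t, ht, fun s hst ↦ ?_⟩
  have hdist {u v : E} (hu : u ∈ s) (hv : v ∈ s) :=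
    dist_le_one_add_mul_dist_of_approximatesLinearOn hG
      (norm_le_mul_norm_of_hasFDerivAt hG hL.hasFDerivAt) happrox (hst hu) (hst hv)
  constructor
  · exact (hausdorffMeasure_image_le_of_dist_le hd fun u hu v hv ↦ (hdist hu hv).1.trans
      (mul_le_mul_of_nonneg_right hηk' dist_nonneg)).trans (mul_le_mul_left hkc _)
  · exact (hausdorffMeasure_image_le_of_dist_le hd fun u hu v hv ↦ (hdist hu hv).2.trans
      (mul_le_mul_of_nonneg_right hηk' dist_nonneg)).trans (mul_le_mul_left hkc _)

variable [FiniteDimensional ℝ E] [MeasurableSpace E] [BorelSpace E] [MeasurableSpace F]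
  [BorelSpace F]

theorem exists_hausdorffMeasure_image_eq_mul {L : E →L[ℝ] F} (hL : Function.Injective L) :
    ∃ J : ℝ≥0, ∀ s : Set E,
      μH[Module.finrank ℝ E] (L '' s) = J * μH[Module.finrank ℝ E] s := by
  let e : E ≃L[ℝ] L.range :=
    (LinearEquiv.ofInjective (L : E →ₗ[ℝ] F) hL).toContinuousLinearEquiv
  have hrank : Module.finrank ℝ L.range = Module.finrank ℝ E := e.toLinearEquiv.finrank_eq.symm
  have : (μH[Module.finrank ℝ E] : Measure L.range).IsAddHaarMeasure := by
    rw [← hrank]; infer_instance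
  set ν : Measure E := Measure.map e.symm μH[Module.finrank ℝ E]
  refine ⟨ν.addHaarScalarFactor μH[Module.finrank ℝ E], fun s ↦ ?_⟩
  have hν : ν s = μH[Module.finrank ℝ E] (e '' s) := by
    rw [e.image_eq_preimage_symm]
    exact e.symm.toHomeomorph.toMeasurableEquiv.map_apply s
  have himage : L '' s = Subtype.val '' (e '' s) := by
    rw [image_image]; rfl
  rw [himage, isometry_subtype_coe.hausdorffMeasure_image (Or.inl (Nat.cast_nonneg _)), ← hν]
  exact DFunLike.congr_fun (Measure.isAddLeftInvariant_eq_smul ν μH[Module.finrank ℝ E]) s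

theorem exists_density_hausdorffMeasure_range (hGΛ : LipschitzWith Λ G)
    (hG : AntilipschitzWith κ G) (hL : HasStrictFDerivAt G L z) :
    ∃ (h : E → ℝ≥0) (B J : ℝ≥0), AEMeasurable h μH[Module.finrank ℝ E] ∧ (∀ u, h u ≤ B) ∧
      Tendsto h (𝓝 z) (𝓝 J) ∧ (μH[Module.finrank ℝ E] : Measure F).restrict (range G) =
        Measure.map G ((μH[Module.finrank ℝ E]).withDensity fun u ↦ (h u : ℝ≥0∞)) := by
  have hn : (0 : ℝ) ≤ Module.finrank ℝ E := Nat.cast_nonneg _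
  have hLinj : Function.Injective L := (injective_iff_map_eq_zero L).2 fun v hv ↦ by
    simpa [hv] using norm_le_mul_norm_of_hasFDerivAt hG hL.hasFDerivAt v
  have hemb : MeasurableEmbedding G :=
    (hG.isClosedEmbedding hGΛ.uniformContinuous).measurableEmbedding
  obtain ⟨J, hJ⟩ := exists_hausdorffMeasure_image_eq_mul hLinj
  obtain ⟨h, hm, hB, hlim, hν⟩ := exists_bounded_density_tendsto
    (lam := μH[Module.finrank ℝ E]) (ν := Measure.comap G μH[Module.finrank ℝ E])
    (B := Λ ^ Module.finrank ℝ E) (J := J) (z := z)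
    (Measure.le_iff.2 fun s _ ↦ by
      simpa [hemb.comap_apply] using hGΛ.hausdorffMeasure_image_le hn s)
    (fun c hc ↦ by
      simpa only [hemb.comap_apply, ← hJ] using eventually_hausdorffMeasure_image_le hG hL hn hc)
  exact ⟨h, _, J, hm, hB, hlim, by rw [← hν, hemb.map_comap]⟩

end SurfaceMeasure

section Kernel

variable {F : Type*} [NormedAddCommGroup F] {K : F → ℝ} {C ε a b : ℝ} {n : ℕ}

/-- The kernel `K` cut off to zero on the closed ball of radius `ε`. -/
def truncKernel (K : F → ℝ) (ε : ℝ) (p : F) : ℝ :=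
  if ε < ‖p‖ then K p else 0

/-- The kernel that the symmetrized truncated integrals at `x ± ω` minus the truncated integral at
`x` apply to a point displaced from `x` by `q`, in the scale in which `ω` is a unit vector. -/
def symmetrizedKernel (K : F → ℝ) (b : ℝ) (ω q : F) : ℝ :=
  (truncKernel K b (ω - q) + truncKernel K b (-ω - q)) / 2 - truncKernel K 1 (-q)

theorem truncKernel_of_lt {p : F} (h : ε < ‖p‖) : truncKernel K ε p = K p := if_pos h

variable [NormedSpace ℝ F]

/-- An odd Calderón–Zygmund kernel `K` of homogeneity `-n`, with size and gradient constant `C`.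
Homogeneity is encoded by `K (r p) = K p / r ^ n` instead of `K p = Ω p / ‖p‖ ^ n`. -/
structure IsOddCalderonZygmundKernel (n : ℕ) (C : ℝ) (K : F → ℝ) : Prop where
  nonneg : 0 ≤ C
  map_neg : ∀ p, K (-p) = -K p
  map_smul : ∀ (r : ℝ) (p), 0 < r → K (r • p) = K p / r ^ n
  differentiableAt : ∀ p, p ≠ 0 → DifferentiableAt ℝ K p
  abs_le_div : ∀ p, p ≠ 0 → |K p| ≤ C / ‖p‖ ^ n
  norm_fderiv_le : ∀ p, p ≠ 0 → ‖fderiv ℝ K p‖ ≤ C / ‖p‖ ^ (n + 1)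

namespace IsOddCalderonZygmundKernel

theorem measurable [MeasurableSpace F] [BorelSpace F] (hK : IsOddCalderonZygmundKernel n C K) :
    Measurable K :=
  measurable_of_continuousOn_compl_singleton 0 fun p hp ↦
    (hK.differentiableAt p hp).continuousAt.continuousWithinAt

theorem abs_sub_le (hK : IsOddCalderonZygmundKernel n C K) {c : ℝ} (hc : 0 < c) {p q : F}
    (h : c + ‖q - p‖ ≤ ‖p‖) : |K q - K p| ≤ C / c ^ (n + 1) * ‖q - p‖ := by
  have hC := hK.nonneg
  have hnorm (y : F) (hy : y ∈ closedBall p ‖q - p‖) : c ≤ ‖y‖ := by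
    rw [mem_closedBall, dist_eq_norm] at hy
    linarith [norm_sub_norm_le p y, norm_sub_rev y p]
  have hne (y : F) (hy : y ∈ closedBall p ‖q - p‖) : y ≠ 0 :=
    norm_pos_iff.1 (hc.trans_le (hnorm y hy))
  refine (convex_closedBall p ‖q - p‖).norm_image_sub_le_of_norm_fderiv_le (𝕜 := ℝ)
    (fun y hy ↦ hK.differentiableAt y (hne y hy)) (fun y hy ↦ ?_)
    (mem_closedBall_self (norm_nonneg _)) (by simp [dist_eq_norm])
  have hcy := hnorm y hy
  exact (hK.norm_fderiv_le y (hne y hy)).trans (by gcongr)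

theorem abs_truncKernel_le (hK : IsOddCalderonZygmundKernel n C K) (hε : 0 < ε) (p : F) :
    |truncKernel K ε p| ≤ C / ε ^ n := by
  have hC := hK.nonneg
  unfold truncKernel
  split_ifs with hp
  · exact (hK.abs_le_div p (norm_pos_iff.1 (hε.trans hp))).trans (by gcongr)
  · rw [abs_zero]
    positivity

theorem truncKernel_neg (hK : IsOddCalderonZygmundKernel n C K) (p : F) :
    truncKernel K ε (-p) = -truncKernel K ε p := by
  simp only [truncKernel, norm_neg, hK.map_neg]
  split_ifs <;> simp

theorem pow_mul_truncKernel_smul (hK : IsOddCalderonZygmundKernel n C K) {r : ℝ} (hr : 0 < r)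
    (p : F) : r ^ n * truncKernel K (ε * r) (r • p) = truncKernel K ε p := by
  simp only [truncKernel, norm_smul, Real.norm_of_nonneg hr.le, mul_comm ε r,
    mul_lt_mul_iff_right₀ hr, hK.map_smul r p hr, mul_ite, mul_zero,
    mul_div_cancel₀ _ (pow_pos hr n).ne']

theorem measurable_truncKernel [MeasurableSpace F] [BorelSpace F]
    (hK : IsOddCalderonZygmundKernel n C K) : Measurable (truncKernel K ε) :=
  Measurable.ite (measurableSet_lt measurable_const continuous_norm.measurable) hK.measurable
    measurable_const

theorem continuousAt_truncKernel (hK : IsOddCalderonZygmundKernel n C K) (hε : 0 ≤ ε) {p : F}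
    (hp : ‖p‖ ≠ ε) : ContinuousAt (truncKernel K ε) p := by
  rcases hp.lt_or_gt with h | h
  · refine continuousAt_const.congr (f := fun _ ↦ (0 : ℝ)) ?_
    filter_upwards [continuous_norm.continuousAt.eventually_lt_const h] with q hq
    exact (if_neg hq.not_gt).symm
  · refine (hK.differentiableAt p (norm_pos_iff.1 (hε.trans_lt h))).continuousAt.congr ?_
    filter_upwards [continuous_norm.continuousAt.eventually_const_lt h] with q hq
    exact (truncKernel_of_lt hq).symm

theorem tendsto_truncKernel_sub (hK : IsOddCalderonZygmundKernel n C K) (hb : 0 < b) (hba : b < a)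
    {ι : Type*} {l : Filter ι} {p q : ι → F} (hp : ∀ᶠ i in l, a ≤ ‖p i‖)
    (hpq : Tendsto (fun i ↦ q i - p i) l (𝓝 0)) :
    Tendsto (fun i ↦ truncKernel K b (q i) - truncKernel K b (p i)) l (𝓝 0) := by
  have hlim : Tendsto (fun i ↦ C / b ^ (n + 1) * ‖q i - p i‖) l (𝓝 0) := by
    simpa using hpq.norm.const_mul (C / b ^ (n + 1))
  refine squeeze_zero_norm' ?_ hlim
  filter_upwards [hp, hpq.norm.eventually_lt_const (by simpa using hba : ‖(0 : F)‖ < a - b)]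
    with i hi hclose
  rw [truncKernel_of_lt (by linarith [norm_sub_norm_le (p i) (q i), norm_sub_rev (p i) (q i)]),
    truncKernel_of_lt (hba.trans_le hi)]
  exact hK.abs_sub_le hb (by linarith)

theorem symmetrizedKernel_neg (hK : IsOddCalderonZygmundKernel n C K) (ω q : F) :
    symmetrizedKernel K b ω (-q) = -symmetrizedKernel K b ω q := by
  rw [symmetrizedKernel, show ω - -q = -(-ω - q) by abel, show -ω - -q = -(ω - q) by abel,
    hK.truncKernel_neg, hK.truncKernel_neg, hK.truncKernel_neg, symmetrizedKernel]
  ring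

theorem measurable_symmetrizedKernel [MeasurableSpace F] [BorelSpace F]
    (hK : IsOddCalderonZygmundKernel n C K) (ω : F) : Measurable (symmetrizedKernel K b ω) := by
  have hsub (η : F) : Measurable fun q ↦ truncKernel K b (η - q) :=
    hK.measurable_truncKernel.comp (continuous_sub_left η).measurable
  exact (((hsub ω).add (hsub (-ω))).div_const 2).sub
    (hK.measurable_truncKernel.comp continuous_neg.measurable)

theorem abs_symmetrizedKernel_le (hK : IsOddCalderonZygmundKernel n C K) (hb : 0 < b) (ω q : F) :
    |symmetrizedKernel K b ω q| ≤ C / b ^ n + C := by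
  have hω := abs_le.1 (hK.abs_truncKernel_le hb (ω - q))
  have hω' := abs_le.1 (hK.abs_truncKernel_le hb (-ω - q))
  have hq := abs_le.1 (hK.abs_truncKernel_le one_pos (-q))
  rw [one_pow, div_one] at hq
  rw [symmetrizedKernel, abs_le]
  constructor <;> linarith

theorem abs_symmetrizedKernel_le_of_lt_norm (hK : IsOddCalderonZygmundKernel n C K) (hb : 0 < b)
    {ω q : F} (hω : ‖ω‖ = 1) (hq : 2 + b < ‖q‖) :
    |symmetrizedKernel K b ω q| ≤ C / (‖q‖ - 1) ^ (n + 1) := by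
  have hdiff (η : F) (hη : ‖η‖ = 1) :
      |truncKernel K b (η - q) - truncKernel K 1 (-q)| ≤ C / (‖q‖ - 1) ^ (n + 1) := by
    have hlow := norm_sub_norm_le q η
    have hsub : η - q - -q = η := by abel
    rw [norm_sub_rev] at hlow
    rw [truncKernel_of_lt (by linarith), truncKernel_of_lt (by rw [norm_neg]; linarith)]
    simpa only [hsub, hη, mul_one] using
      hK.abs_sub_le (c := ‖q‖ - 1) (by linarith) (p := -q) (q := η - q)
        (by rw [hsub, hη, norm_neg]; linarith)
  have hplus := abs_le.1 (hdiff ω hω)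
  have hminus := abs_le.1 (hdiff (-ω) (by rwa [norm_neg]))
  rw [symmetrizedKernel, abs_le]
  constructor <;> linarith

theorem exists_abs_symmetrizedKernel_le (hK : IsOddCalderonZygmundKernel n C K) (hb : 0 < b) :
    ∃ D : ℝ, 0 ≤ D ∧ ∀ ω q : F, ‖ω‖ = 1 →
      |symmetrizedKernel K b ω q| ≤ D / (1 + ‖q‖) ^ (n + 1) := by
  have hC := hK.nonneg
  have hCb : 0 ≤ C / b ^ n := by positivity
  refine ⟨(C / b ^ n + C) * (3 + b) ^ (n + 1), by positivity, fun ω q hω ↦ ?_⟩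
  rcases le_or_gt ‖q‖ (2 + b) with hq | hq
  · refine (hK.abs_symmetrizedKernel_le hb ω q).trans ?_
    rw [le_div_iff₀ (by positivity)]
    gcongr _ * ?_ ^ _
    linarith
  · refine (hK.abs_symmetrizedKernel_le_of_lt_norm hb hω hq).trans ?_
    have hq1 : 0 < ‖q‖ - 1 := by linarith
    rw [div_le_div_iff₀ (by positivity) (by positivity), mul_assoc, ← mul_pow]
    gcongr
    · linarith
    · nlinarith

theorem exists_abs_symmetrizedKernel_le_of_norm_le (hK : IsOddCalderonZygmundKernel n C K)
    (hb : 0 < b) (E : Type*) [NormedAddCommGroup E] (κ : ℝ≥0) :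
    ∃ D : ℝ, ∀ (ω q : F) (v : E), ‖ω‖ = 1 →
      ‖v‖ ≤ κ * ‖q‖ → |symmetrizedKernel K b ω q| ≤ D / (1 + ‖v‖) ^ (n + 1) := by
  obtain ⟨D, hD, hdecay⟩ := hK.exists_abs_symmetrizedKernel_le hb
  refine ⟨D * (1 + κ) ^ (n + 1), fun ω q v hω hv ↦ (hdecay ω q hω).trans ?_⟩
  rw [div_le_div_iff₀ (by positivity) (by positivity), mul_assoc, ← mul_pow]
  gcongr
  linarith [norm_nonneg q, κ.coe_nonneg]

theorem tendsto_symmetrizedKernel_sub (hK : IsOddCalderonZygmundKernel n C K) (hb : 0 < b)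
    (hba : b < a) {ι : Type*} {l : Filter ι} {ω q : ι → F} {q₀ : F} (hq₀ : ‖q₀‖ ≠ 1)
    (hω : ∀ᶠ i in l, a ≤ ‖ω i - q₀‖) (hω' : ∀ᶠ i in l, a ≤ ‖-ω i - q₀‖)
    (hq : Tendsto q l (𝓝 q₀)) :
    Tendsto (fun i ↦ symmetrizedKernel K b (ω i) (q i) - symmetrizedKernel K b (ω i) q₀) l
      (𝓝 0) := by
  have hsub (η : ι → F) : Tendsto (fun i ↦ η i - q i - (η i - q₀)) l (𝓝 0) := by
    simpa using hq.const_sub q₀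
  have hplus := hK.tendsto_truncKernel_sub hb hba hω (hsub ω)
  have hminus := hK.tendsto_truncKernel_sub hb hba hω' (hsub fun i ↦ -ω i)
  have hcentre := ((hK.continuousAt_truncKernel zero_le_one (by rwa [norm_neg])).tendsto.comp
    hq.neg).sub_const (truncKernel K 1 (-q₀))
  have hsum := ((hplus.add hminus).div_const 2).sub hcentre
  simp only [add_zero, zero_div, sub_self] at hsum
  refine hsum.congr fun i ↦ ?_
  simp only [symmetrizedKernel, Function.comp_apply]
  ring

theorem of_eq_div_norm_pow [Nontrivial F] {Ω : F → ℝ}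
    (hΩ : ∀ p, p ≠ 0 → ∀ t : ℝ, 0 < t → Ω (t • p) = Ω p)
    (hKΩ : ∀ p, p ≠ 0 → K p = Ω p / ‖p‖ ^ n) (hK_neg : ∀ p, K (-p) = -K p)
    (hK_smooth : ContDiffOn ℝ 1 K {0}ᶜ)
    (hK_le : ∀ j ≤ 1, ∀ p, p ≠ 0 →
      ‖iteratedFDerivWithin ℝ j K {0}ᶜ p‖ ≤ C / ‖p‖ ^ (n + j)) :
    IsOddCalderonZygmundKernel n C K where
  nonneg := by
    obtain ⟨p, hp⟩ := exists_ne (0 : F)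
    have hpos : 0 < ‖p‖ ^ n := by positivity
    simpa [div_nonneg_iff, hpos, hpos.not_ge] using (norm_nonneg _).trans (hK_le 0 zero_le_one p hp)
  map_neg := hK_neg
  map_smul r p hr := by
    rcases eq_or_ne p 0 with rfl | hp
    · have hK_zero : K 0 = 0 := by simpa [self_eq_neg] using hK_neg 0
      rw [smul_zero, hK_zero, zero_div]
    · rw [hKΩ p hp, hKΩ _ (smul_ne_zero hr.ne' hp), hΩ p hp r hr, norm_smul,
        Real.norm_of_nonneg hr.le, mul_pow, div_div, mul_comm]
  differentiableAt p hp :=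
    (hK_smooth.contDiffAt (isOpen_compl_singleton.mem_nhds hp)).differentiableAt one_ne_zero
  abs_le_div p hp := by simpa using hK_le 0 zero_le_one p hp
  norm_fderiv_le p hp := by
    have hopen : IsOpen ({0}ᶜ : Set F) := isOpen_compl_singleton
    simpa only [norm_iteratedFDerivWithin_one _ (hopen.uniqueDiffWithinAt hp),
      fderivWithin_of_isOpen hopen hp] using hK_le 1 le_rfl p hp

end IsOddCalderonZygmundKernel

end Kernel

section TruncatedIntegral

variable {α F : Type*} [MeasurableSpace α] [NormedAddCommGroup F]

/-- The truncated singular integral `T_ε ν (y)` of the image `ν` under `G` of the measure with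
density `ρ` with respect to `μ`; for `G = id` this is `T_ε(ρμ)(y)`. -/
def truncIntegral (K : F → ℝ) (G : α → F) (ρ : α → ℝ) (μ : Measure α) (ε : ℝ) (y : F) : ℝ :=
  ∫ u, truncKernel K ε (y - G u) * ρ u ∂μ

variable [NormedSpace ℝ F] [MeasurableSpace F] [BorelSpace F] {K : F → ℝ} {n : ℕ} {C b ε : ℝ}
  {G : α → F} {ρ : α → ℝ} {μ : Measure α}

theorem integrable_truncKernel_mul (hK : IsOddCalderonZygmundKernel n C K) (hG : Measurable G)
    (hρ : Integrable ρ μ) (hε : 0 < ε) (y : F) :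
    Integrable (fun u ↦ truncKernel K ε (y - G u) * ρ u) μ :=
  hρ.bdd_mul (hK.measurable_truncKernel.comp
      ((continuous_sub_left y).measurable.comp hG)).aestronglyMeasurable
    (Eventually.of_forall fun _ ↦ hK.abs_truncKernel_le hε _)

theorem truncIntegral_half_sum_sub (hK : IsOddCalderonZygmundKernel n C K) (hG : Measurable G)
    (hρ : Integrable ρ μ) (hb : 0 < b) (ω : F) :
    (truncIntegral K G ρ μ b ω + truncIntegral K G ρ μ b (-ω)) / 2 - truncIntegral K G ρ μ 1 0 =
      ∫ u, symmetrizedKernel K b ω (G u) * ρ u ∂μ := by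
  have hplus := integrable_truncKernel_mul hK hG hρ hb ω
  have hminus := integrable_truncKernel_mul hK hG hρ hb (-ω)
  have hcentre := integrable_truncKernel_mul hK hG hρ one_pos 0
  have hmean : Integrable (fun u ↦
      (truncKernel K b (ω - G u) * ρ u + truncKernel K b (-ω - G u) * ρ u) / 2) μ :=
    (hplus.add hminus).div_const 2
  simp only [truncIntegral]
  rw [← integral_add hplus hminus, ← integral_div, ← integral_sub hmean hcentre]
  refine integral_congr_ae (Eventually.of_forall fun u ↦ ?_)
  simp only [symmetrizedKernel, zero_sub]
  ring

end TruncatedIntegral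

section Rescaling

variable {E F : Type*} [NormedAddCommGroup E] [NormedSpace ℝ E] [FiniteDimensional ℝ E]
  [MeasurableSpace E] [BorelSpace E] {lam : Measure E} [lam.IsAddHaarMeasure]
  [NormedAddCommGroup F] [NormedSpace ℝ F] {K : F → ℝ} {C a b : ℝ} {G : E → F} {ρ : E → ℝ} {z : E}

theorem integral_eq_pow_mul_integral_comp_add_smul (f : E → ℝ) (z : E) {r : ℝ} (hr : 0 < r) :
    ∫ u, f u ∂lam = r ^ Module.finrank ℝ E * ∫ v, f (z + r • v) ∂lam := by
  rw [Measure.integral_comp_smul_of_nonneg lam (fun u ↦ f (z + u)) r (hR := hr.le),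
    integral_add_left_eq_self, smul_eq_mul, mul_inv_cancel_left₀ (pow_pos hr _).ne']

theorem integrable_comp_add_smul (hρ : Integrable ρ lam) (z : E) {r : ℝ} (hr : r ≠ 0) :
    Integrable (fun v ↦ ρ (z + r • v)) lam :=
  (hρ.comp_add_left z).comp_smul hr

theorem truncIntegral_add_smul (hK : IsOddCalderonZygmundKernel (Module.finrank ℝ E) C K) (ε : ℝ)
    {r : ℝ} (hr : 0 < r) (η : F) : truncIntegral K G ρ lam (ε * r) (G z + r • η) =
      truncIntegral K (blowup G z r) (fun v ↦ ρ (z + r • v)) lam ε η := by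
  rw [truncIntegral, integral_eq_pow_mul_integral_comp_add_smul _ z hr, ← integral_const_mul]
  refine integral_congr_ae (Eventually.of_forall fun v ↦ ?_)
  have hdisp : G z + r • η - G (z + r • v) = r • (η - blowup G z r v) := by
    rw [smul_sub, smul_blowup hr.ne']
    abel
  simp only [hdisp, ← mul_assoc, hK.pow_mul_truncKernel_smul hr]

theorem measure_setOf_norm_map_eq_one (L : E →L[ℝ] F) : lam {v | ‖L v‖ = 1} = 0 := by
  have hconv : Convex ℝ {v | ‖L v‖ ≤ 1} := by
    simpa [preimage, mem_closedBall_zero_iff] using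
      (convex_closedBall (0 : F) 1).linear_preimage (L : E →ₗ[ℝ] F)
  refine measure_mono_null (fun v (hv : ‖L v‖ = 1) ↦ ?_) (hconv.addHaar_frontier lam)
  rw [frontier_eq_closure_inter_closure]
  refine ⟨subset_closure hv.le, ?_⟩
  have hlim : Tendsto (fun t : ℝ ↦ t • v) (𝓝[>] 1) (𝓝 v) := by
    have hcont : Continuous fun t : ℝ ↦ t • v := by fun_prop
    simpa using (hcont.tendsto 1).mono_left nhdsWithin_le_nhds
  refine mem_closure_of_tendsto hlim ?_
  filter_upwards [self_mem_nhdsWithin] with t (ht : 1 < t)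
  simpa [norm_smul, hv] using ht.trans_le (le_abs_self t)

theorem integrable_div_one_add_norm_pow (D : ℝ) :
    Integrable (fun v : E ↦ D / (1 + ‖v‖) ^ (Module.finrank ℝ E + 1)) lam := by
  have hint := (integrable_one_add_norm (μ := lam) (E := E)
    (r := ((Module.finrank ℝ E + 1 : ℕ) : ℝ)) (by push_cast; linarith)).const_mul D
  refine hint.congr (Eventually.of_forall fun v ↦ ?_)
  have hv : 0 ≤ 1 + ‖v‖ := by positivity
  simp only [Real.rpow_neg hv, Real.rpow_natCast, div_eq_mul_inv]

theorem integral_symmetrizedKernel_comp_eq_zero {n : ℕ} (hK : IsOddCalderonZygmundKernel n C K)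
    (L : E →L[ℝ] F) (ω : F) : ∫ v, symmetrizedKernel K b ω (L v) ∂lam = 0 := by
  have hodd := integral_neg_eq_self (fun v ↦ symmetrizedKernel K b ω (L v)) lam
  simp only [map_neg, hK.symmetrizedKernel_neg, integral_neg] at hodd
  linarith

end Rescaling

section Limit

theorem tendsto_integral_sub_integral_of_dominated {α ι : Type*} [MeasurableSpace α]
    {μ : Measure α} {l : Filter ι} [l.IsCountablyGenerated] {f g : ι → α → ℝ}
    {B B' : α → ℝ} (hB : Integrable B μ) (hB' : Integrable B' μ)
    (hf : ∀ᶠ i in l, AEStronglyMeasurable (f i) μ) (hg : ∀ᶠ i in l, AEStronglyMeasurable (g i) μ)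
    (hfB : ∀ᶠ i in l, ∀ u, ‖f i u‖ ≤ B u) (hgB : ∀ᶠ i in l, ∀ u, ‖g i u‖ ≤ B' u)
    (hfg : ∀ᵐ u ∂μ, Tendsto (fun i ↦ f i u - g i u) l (𝓝 0)) :
    Tendsto (fun i ↦ ∫ u, f i u ∂μ - ∫ u, g i u ∂μ) l (𝓝 0) := by
  have hlim : Tendsto (fun i ↦ ∫ u, (f i u - g i u) ∂μ) l (𝓝 (∫ _, 0 ∂μ)) := by
    refine tendsto_integral_filter_of_dominated_convergence (fun u ↦ B u + B' u) ?_ ?_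
      (hB.add hB') hfg
    · filter_upwards [hf, hg] with i hfi hgi using hfi.sub hgi
    · filter_upwards [hfB, hgB] with i hfi hgi
      exact Eventually.of_forall fun u ↦ norm_sub_le_of_le (hfi u) (hgi u)
  rw [integral_zero] at hlim
  refine hlim.congr' ?_
  filter_upwards [hf, hg, hfB, hgB] with i hfi hgi hfBi hgBi
  exact integral_sub (hB.mono' hfi (Eventually.of_forall hfBi))
    (hB'.mono' hgi (Eventually.of_forall hgBi))

variable {E F : Type*} [NormedAddCommGroup E] [NormedSpace ℝ E] [NormedAddCommGroup F]
  [NormedSpace ℝ F] {K : F → ℝ} {C M a b ρ₀ : ℝ} {κ Λ : ℝ≥0} {G : E → F} {L : E →L[ℝ] F}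
  {ρ : E → ℝ} {z : E}

theorem tendsto_symmetrizedKernel_mul_sub {n : ℕ} (hK : IsOddCalderonZygmundKernel n C K)
    (hL : HasFDerivAt G L z) (hρz : Tendsto ρ (𝓝 z) (𝓝 ρ₀)) (hb : 0 < b) (hba : b < a)
    {ι : Type*} {l : Filter ι} {r : ι → ℝ} {ω : ι → F} (hr : Tendsto r l (𝓝[>] 0))
    (hωL : ∀ᶠ i in l, ∀ v, a ≤ ‖ω i - L v‖) {v : E} (hv : ‖L v‖ ≠ 1) :
    Tendsto (fun i ↦ symmetrizedKernel K b (ω i) (blowup G z (r i) v) * ρ (z + r i • v) -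
      symmetrizedKernel K b (ω i) (L v) * ρ₀) l (𝓝 0) := by
  have hkernel : Tendsto (fun i ↦ symmetrizedKernel K b (ω i) (blowup G z (r i) v) -
      symmetrizedKernel K b (ω i) (L v)) l (𝓝 0) := by
    refine hK.tendsto_symmetrizedKernel_sub hb hba hv (hωL.mono fun i hi ↦ hi v)
      (hωL.mono fun i hi ↦ (hi (-v)).trans_eq ?_) ((tendsto_blowup hL v).comp hr)
    rw [map_neg, ← norm_neg]
    congr 1
    abel
  have hdensity : Tendsto (fun i ↦ ρ (z + r i • v)) l (𝓝 ρ₀) := by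
    refine hρz.comp ?_
    simpa using ((hr.mono_right nhdsWithin_le_nhds).smul_const v).const_add z
  have hkernel_mul := hkernel.mul hdensity
  have hmul_density : Tendsto (fun i ↦ symmetrizedKernel K b (ω i) (L v) *
      (ρ (z + r i • v) - ρ₀)) l (𝓝 0) :=
    bdd_le_mul_tendsto_zero' (C / b ^ n + C)
      (Eventually.of_forall fun i ↦ hK.abs_symmetrizedKernel_le hb (ω i) (L v))
      (by simpa using hdensity.sub_const ρ₀)
  have hsum := hkernel_mul.add hmul_density
  rw [zero_mul, add_zero] at hsum
  refine hsum.congr fun i ↦ ?_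
  ring

/-- The nontangential approach region of aperture `a` at `x` with respect to the range of `L`: the
points at distance at least `a ‖y - x‖` from the affine subspace `x + range L`. For a unit vector
`u` orthogonal to the range of `L` it contains the cone `X_a(x,u)`. -/
def nontangentialRegion (a : ℝ) (x : F) (L : E →L[ℝ] F) : Set F :=
  {y | y ≠ x ∧ ∀ v, a * ‖y - x‖ ≤ ‖y - x - L v‖}

theorem le_norm_inv_smul_sub {x y : F} (hy : y ∈ nontangentialRegion a x L) (v : E) :
    a ≤ ‖‖y - x‖⁻¹ • (y - x) - L v‖ := by
  have hr : 0 < ‖y - x‖ := norm_pos_iff.2 (sub_ne_zero.2 hy.1)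
  have hscale : y - x - L (‖y - x‖ • v) = ‖y - x‖ • (‖y - x‖⁻¹ • (y - x) - L v) := by
    rw [smul_sub, smul_inv_smul₀ hr.ne', map_smul]
  have h := hy.2 (‖y - x‖ • v)
  rw [hscale, norm_smul, norm_norm, mul_comm a] at h
  exact le_of_mul_le_mul_left h hr

variable [FiniteDimensional ℝ E] [MeasurableSpace E] [BorelSpace E] [MeasurableSpace F]
  [BorelSpace F]

theorem tendsto_integral_symmetrizedKernel_mul {lam : Measure E} [lam.IsAddHaarMeasure]
    (hK : IsOddCalderonZygmundKernel (Module.finrank ℝ E) C K)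
    (hG : Continuous G) (hGκ : AntilipschitzWith κ G) (hL : HasFDerivAt G L z)
    (hρ : Integrable ρ lam) (hρM : ∀ u, |ρ u| ≤ M) (hρz : Tendsto ρ (𝓝 z) (𝓝 ρ₀)) (hb : 0 < b)
    (hba : b < a) {ι : Type*} {l : Filter ι} [l.IsCountablyGenerated] {r : ι → ℝ} {ω : ι → F}
    (hr : Tendsto r l (𝓝[>] 0)) (hω : ∀ᶠ i in l, ‖ω i‖ = 1)
    (hωL : ∀ᶠ i in l, ∀ v, a ≤ ‖ω i - L v‖) :
    Tendsto (fun i ↦ ∫ v, symmetrizedKernel K b (ω i) (blowup G z (r i) v) * ρ (z + r i • v) ∂lam)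
      l (𝓝 0) := by
  obtain ⟨D, hD⟩ := hK.exists_abs_symmetrizedKernel_le_of_norm_le hb E κ
  have hmeas (i : ι) : Measurable (symmetrizedKernel K b (ω i)) :=
    hK.measurable_symmetrizedKernel (ω i)
  have hdecay := integrable_div_one_add_norm_pow (E := E) (lam := lam) D
  have hpos : ∀ᶠ i in l, 0 < r i := (tendsto_nhdsWithin_iff.1 hr).2
  have hdiff := tendsto_integral_sub_integral_of_dominated (μ := lam) (l := l)
    (f := fun i v ↦ symmetrizedKernel K b (ω i) (blowup G z (r i) v) * ρ (z + r i • v))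
    (g := fun i v ↦ symmetrizedKernel K b (ω i) (L v) * ρ₀)
    (hdecay.mul_const M) (hdecay.mul_const |ρ₀|) ?_ ?_ ?_ ?_ ?_
  · simpa only [integral_mul_const, integral_symmetrizedKernel_comp_eq_zero hK, zero_mul,
      sub_zero] using hdiff
  · filter_upwards [hpos] with i hri
    exact ((hmeas i).comp (continuous_blowup hG _).measurable).aestronglyMeasurable.mul
      (integrable_comp_add_smul hρ z hri.ne').aestronglyMeasurable
  · exact Eventually.of_forall fun i ↦
      (((hmeas i).comp L.continuous.measurable).mul_const _).aestronglyMeasurable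
  · filter_upwards [hω, hpos] with i hi hri v
    have hΦ := hD _ _ v hi (norm_le_mul_norm_blowup hGκ hri v (z := z))
    rw [norm_mul]
    exact mul_le_mul hΦ (hρM _) (abs_nonneg _) ((abs_nonneg _).trans hΦ)
  · filter_upwards [hω] with i hi v
    rw [norm_mul]
    exact mul_le_mul_of_nonneg_right
      (hD _ _ v hi (norm_le_mul_norm_of_hasFDerivAt hGκ hL v)) (abs_nonneg _)
  · have hsphere : ∀ᵐ v ∂lam, ‖L v‖ ≠ 1 := by
      simpa [ae_iff] using measure_setOf_norm_map_eq_one L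
    filter_upwards [hsphere] with v hv
      using tendsto_symmetrizedKernel_mul_sub hK hL hρz hb hba hr hωL hv

theorem half_sum_truncIntegral_eq {lam : Measure E} [lam.IsAddHaarMeasure]
    (hK : IsOddCalderonZygmundKernel (Module.finrank ℝ E) C K) (hG : Continuous G)
    (hρ : Integrable ρ lam) (hb : 0 < b) {r : ℝ} (hr : 0 < r) (ω : F) :
    (truncIntegral K G ρ lam (b * r) (G z + r • ω) +
        truncIntegral K G ρ lam (b * r) (G z + r • -ω)) / 2 =
      truncIntegral K G ρ lam r (G z) +
        ∫ v, symmetrizedKernel K b ω (blowup G z r v) * ρ (z + r • v) ∂lam := by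
  have hrescaled := truncIntegral_half_sum_sub hK (continuous_blowup (z := z) hG r).measurable
    (integrable_comp_add_smul hρ z hr.ne') hb ω
  simp only [← truncIntegral_add_smul hK _ hr, one_mul, smul_zero, add_zero] at hrescaled
  linarith

theorem tendsto_half_sum_truncIntegral {lam : Measure E} [lam.IsAddHaarMeasure]
    (hK : IsOddCalderonZygmundKernel (Module.finrank ℝ E) C K)
    (hG : Continuous G) (hGκ : AntilipschitzWith κ G) (hL : HasFDerivAt G L z)
    (hρ : Integrable ρ lam) (hρM : ∀ u, |ρ u| ≤ M) (hρz : Tendsto ρ (𝓝 z) (𝓝 ρ₀)) (hb : 0 < b)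
    (hba : b < a) {p : ℝ}
    (hpv : Tendsto (fun ε ↦ truncIntegral K G ρ lam ε (G z)) (𝓝[>] 0) (𝓝 p)) :
    Tendsto (fun y ↦ (truncIntegral K G ρ lam (b * ‖y - G z‖) y +
      truncIntegral K G ρ lam (b * ‖y - G z‖) ((2 : ℝ) • G z - y)) / 2)
      (𝓝[nontangentialRegion a (G z) L] (G z)) (𝓝 p) := by
  set l := 𝓝[nontangentialRegion a (G z) L] (G z)
  set r : F → ℝ := fun y ↦ ‖y - G z‖
  set ω : F → F := fun y ↦ (r y)⁻¹ • (y - G z)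
  have hpos {y : F} (hy : y ∈ nontangentialRegion a (G z) L) : 0 < r y :=
    norm_pos_iff.2 (sub_ne_zero.2 hy.1)
  have hr : Tendsto r l (𝓝[>] 0) :=
    (tendsto_norm_sub_self_nhdsNE (G z)).mono_left (nhdsWithin_mono _ fun y hy ↦ hy.1)
  have hremainder := tendsto_integral_symmetrizedKernel_mul hK hG hGκ hL hρ hρM hρz hb hba hr
    (ω := ω) (eventually_mem_nhdsWithin.mono fun y hy ↦ norm_smul_inv_norm (𝕜 := ℝ)
      (sub_ne_zero.2 hy.1))
    (eventually_mem_nhdsWithin.mono fun y hy ↦ le_norm_inv_smul_sub hy)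
  have hsum := (hpv.comp hr).add hremainder
  rw [add_zero] at hsum
  refine hsum.congr' ?_
  filter_upwards [eventually_mem_nhdsWithin] with y hy
  have hy_eq : r y • ω y = y - G z := smul_inv_smul₀ (hpos hy).ne' _
  have hhalf := half_sum_truncIntegral_eq hK hG hρ hb (hpos hy) (ω y) (z := z)
  rw [smul_neg, hy_eq, show G z + (y - G z) = y by abel,
    show G z + -(y - G z) = (2 : ℝ) • G z - y by rw [two_smul]; abel] at hhalf
  exact hhalf.symm

theorem exists_truncIntegral_restrict_range_eq (hGΛ : LipschitzWith Λ G)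
    (hGκ : AntilipschitzWith κ G) (hL : HasStrictFDerivAt G L z) {g : F → ℝ}
    (hg : Integrable g (μH[Module.finrank ℝ E].restrict (range G))) (hgM : ∀ q, |g q| ≤ M)
    (hgz : ContinuousAt g (G z)) :
    ∃ (ρ : E → ℝ) (B ρ₀ : ℝ), Integrable ρ μH[Module.finrank ℝ E] ∧ (∀ u, |ρ u| ≤ B) ∧
      Tendsto ρ (𝓝 z) (𝓝 ρ₀) ∧ ∀ (K : F → ℝ) (ε : ℝ) (y : F),
        truncIntegral K id g (μH[Module.finrank ℝ E].restrict (range G)) ε y =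
          truncIntegral K G ρ μH[Module.finrank ℝ E] ε y := by
  obtain ⟨h, B, J, hm, hB, hJ, hdensity⟩ := exists_density_hausdorffMeasure_range hGΛ hGκ hL
  have hemb : MeasurableEmbedding G :=
    (hGκ.isClosedEmbedding hGΛ.uniformContinuous).measurableEmbedding
  rw [hdensity] at hg ⊢
  refine ⟨fun u ↦ h u * g (G u), B * M, J * g (G z), ?_, fun u ↦ ?_, ?_, fun K ε y ↦ ?_⟩
  · exact (integrable_withDensity_iff_integrable_smul₀ hm).1 (hemb.integrable_map_iff.1 hg)
  · rw [abs_mul, NNReal.abs_eq]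
    exact mul_le_mul (by exact_mod_cast hB u) (hgM _) (abs_nonneg _) B.coe_nonneg
  · exact (NNReal.tendsto_coe.2 hJ).mul (hgz.tendsto.comp hGΛ.continuous.continuousAt)
  · rw [truncIntegral, hemb.integral_map, integral_withDensity_eq_integral_smul₀ hm]
    refine integral_congr_ae (Eventually.of_forall fun u ↦ ?_)
    simp only [id_eq, NNReal.smul_def, smul_eq_mul]
    ring

theorem tendsto_half_sum_truncIntegral_restrict_range
    (hK : IsOddCalderonZygmundKernel (Module.finrank ℝ E) C K) (hGΛ : LipschitzWith Λ G)
    (hGκ : AntilipschitzWith κ G) (hL : HasStrictFDerivAt G L z) {g : F → ℝ} {μ : Measure F}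
    (hμ : μ = μH[Module.finrank ℝ E].restrict (range G)) (hg : Integrable g μ)
    (hgM : ∀ q, |g q| ≤ M) (hgz : ContinuousAt g (G z)) (hb : 0 < b) (hba : b < a) {p : ℝ}
    (hpv : Tendsto (fun ε ↦ truncIntegral K id g μ ε (G z)) (𝓝[>] 0) (𝓝 p)) :
    Tendsto (fun y ↦ (truncIntegral K id g μ (b * ‖y - G z‖) y +
      truncIntegral K id g μ (b * ‖y - G z‖) ((2 : ℝ) • G z - y)) / 2)
      (𝓝[nontangentialRegion a (G z) L] (G z)) (𝓝 p) := by
  subst hμ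
  obtain ⟨ρ, B, ρ₀, hρ, hρB, hρz, hT⟩ :=
    exists_truncIntegral_restrict_range_eq hGΛ hGκ hL hg hgM hgz
  simp only [hT] at hpv ⊢
  exact tendsto_half_sum_truncIntegral hK hGΛ.continuous hGκ hL.hasFDerivAt hρ hρB hρz hb hba hpv

end Limit

section Graph

variable {n : ℕ} {A : EuclideanSpace ℝ (Fin n) → ℝ}

theorem norm_graphMap_sub_sq (A : EuclideanSpace ℝ (Fin n) → ℝ) (u v : EuclideanSpace ℝ (Fin n)) :
    ‖graphMap A u - graphMap A v‖ ^ 2 = ‖u - v‖ ^ 2 + (A u - A v) ^ 2 := by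
  rw [EuclideanSpace.norm_sq_eq, EuclideanSpace.norm_sq_eq, Fin.sum_univ_castSucc]
  simp [graphMap]

theorem antilipschitzWith_graphMap (A : EuclideanSpace ℝ (Fin n) → ℝ) :
    AntilipschitzWith 1 (graphMap A) := by
  refine AntilipschitzWith.of_le_mul_dist fun u v ↦ ?_
  rw [NNReal.coe_one, one_mul, dist_eq_norm, dist_eq_norm]
  refine le_of_sq_le_sq ?_ (norm_nonneg _)
  rw [norm_graphMap_sub_sq]
  exact le_add_of_nonneg_right (sq_nonneg _)

theorem lipschitzWith_graphMap {κ : ℝ≥0} (hA : LipschitzWith κ A) :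
    LipschitzWith (1 + κ) (graphMap A) := by
  refine LipschitzWith.of_dist_le_mul fun u v ↦ ?_
  have hκ : |A u - A v| ≤ κ * ‖u - v‖ := by
    simpa only [dist_eq_norm, Real.norm_eq_abs] using hA.dist_le_mul u v
  rw [dist_eq_norm, dist_eq_norm]
  refine le_of_sq_le_sq ?_ (by positivity)
  rw [norm_graphMap_sub_sq, NNReal.coe_add, NNReal.coe_one]
  nlinarith [sq_le_sq' (abs_le.1 hκ).1 (abs_le.1 hκ).2,
    mul_nonneg κ.coe_nonneg (sq_nonneg ‖u - v‖)]

theorem hasStrictFDerivAt_graphMap {z : EuclideanSpace ℝ (Fin n)}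
    {A' : EuclideanSpace ℝ (Fin n) →L[ℝ] ℝ} (hA : HasStrictFDerivAt A A' z) :
    HasStrictFDerivAt (graphMap A) (fderiv ℝ (graphMap A) z) z := by
  have hcoord (i : Fin (n + 1)) : ∃ L : EuclideanSpace ℝ (Fin n) →L[ℝ] ℝ,
      HasStrictFDerivAt (fun u ↦ graphMap A u i) L z := by
    induction i using Fin.lastCases with
    | last => exact ⟨A', by simpa [graphMap] using hA⟩
    | cast j =>
      let π : EuclideanSpace ℝ (Fin n) →L[ℝ] ℝ := EuclideanSpace.proj j
      exact ⟨π, by simpa [graphMap, π] using π.hasStrictFDerivAt⟩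
  choose L hL using hcoord
  have hgraph : HasStrictFDerivAt (graphMap A)
      ((EuclideanSpace.equiv (Fin (n + 1)) ℝ).symm.toContinuousLinearMap ∘L .pi L) z :=
    hasStrictFDerivAt_euclidean.2 hL
  rwa [hgraph.hasFDerivAt.fderiv]

theorem lipschitzWith_of_norm_gradient_le {E : Type*} [NormedAddCommGroup E]
    [InnerProductSpace ℝ E] [CompleteSpace E] {f : E → ℝ} {κ : ℝ≥0} (hf : Differentiable ℝ f)
    (hκ : ∀ z, ‖gradient f z‖ ≤ κ) : LipschitzWith κ f :=
  lipschitzWith_of_nnnorm_fderiv_le (𝕜 := ℝ) hf fun z ↦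
    NNReal.coe_le_coe.1 <| by
      simpa only [coe_nnnorm, gradient, LinearIsometryEquiv.norm_map] using hκ z

theorem isFiniteMeasureOnCompacts_restrict_range_graphMap {κ : ℝ≥0} (hA : LipschitzWith κ A) :
    IsFiniteMeasureOnCompacts
      ((μH[n] : Measure (EuclideanSpace ℝ (Fin (n + 1)))).restrict (range (graphMap A))) := by
  simpa only [finrank_euclideanSpace_fin] using isFiniteMeasureOnCompacts_restrict_range
    (lipschitzWith_graphMap hA) (antilipschitzWith_graphMap A)

theorem cone_subset_nontangentialRegion {E : Type*} [NormedAddCommGroup E] [NormedSpace ℝ E]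
    (L : E →L[ℝ] EuclideanSpace ℝ (Fin (n + 1))) (a : ℝ) (x : EuclideanSpace ℝ (Fin (n + 1)))
    {u : EuclideanSpace ℝ (Fin (n + 1))} (hu : ‖u‖ = 1) (hLu : ∀ v, ⟪L v, u⟫ = 0) :
    cone a x u ⊆ nontangentialRegion a x L := by
  intro y (hy : a * ‖y - x‖ < ⟪y - x, u⟫)
  refine ⟨?_, fun v ↦ hy.le.trans ?_⟩
  · rintro rfl
    simp at hy
  · simpa [inner_sub_left, hLu, hu] using real_inner_le_norm (y - x - L v) u

theorem TepsDen_eq_truncIntegral (K : EuclideanSpace ℝ (Fin (n + 1)) → ℝ)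
    (μ : Measure (EuclideanSpace ℝ (Fin (n + 1)))) (g : EuclideanSpace ℝ (Fin (n + 1)) → ℝ)
    (ε : ℝ) (y : EuclideanSpace ℝ (Fin (n + 1))) :
    TepsDen K μ g ε y = truncIntegral K id g μ ε y := by
  simp only [TepsDen, truncIntegral, truncKernel, id_eq, dist_eq_norm, ite_mul, zero_mul]

theorem graph_nontangential_half_sum_general {K : EuclideanSpace ℝ (Fin (n + 1)) → ℝ}
    {C M a b : ℝ} (hK : IsOddCalderonZygmundKernel n C K) {κ : ℝ≥0} (hAκ : LipschitzWith κ A)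
    {A' : EuclideanSpace ℝ (Fin n) →L[ℝ] ℝ} {z : EuclideanSpace ℝ (Fin n)}
    (hA : HasStrictFDerivAt A A' z) {u : EuclideanSpace ℝ (Fin (n + 1))} (hu : ‖u‖ = 1)
    (hLu : ∀ v, ⟪fderiv ℝ (graphMap A) z v, u⟫ = 0) {μ : Measure (EuclideanSpace ℝ (Fin (n + 1)))}
    (hμ : μ = μH[n].restrict (range (graphMap A))) {g : EuclideanSpace ℝ (Fin (n + 1)) → ℝ}
    (hg : Integrable g μ) (hgM : ∀ q, |g q| ≤ M) (hgz : ContinuousAt g (graphMap A z))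
    (hb : 0 < b) (hba : b < a) {p : ℝ}
    (hpv : Tendsto (fun ε ↦ TepsDen K μ g ε (graphMap A z)) (𝓝[>] 0) (𝓝 p)) :
    Tendsto (fun y ↦ (TepsDen K μ g (b * dist (graphMap A z) y) y +
      TepsDen K μ g (b * dist (graphMap A z) y) ((2 : ℝ) • graphMap A z - y)) / 2)
      (𝓝[cone a (graphMap A z) u] (graphMap A z)) (𝓝 p) := by
  simp only [TepsDen_eq_truncIntegral, dist_comm (graphMap A z), dist_eq_norm] at hpv ⊢
  refine (tendsto_half_sum_truncIntegral_restrict_range (C := C) ?_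
    (lipschitzWith_graphMap hAκ) (antilipschitzWith_graphMap A) (hasStrictFDerivAt_graphMap hA) ?_
    hg hgM hgz hb hba hpv).mono_left
      (nhdsWithin_mono _ (cone_subset_nontangentialRegion _ a _ hu hLu))
  · rwa [finrank_euclideanSpace_fin]
  · rwa [finrank_euclideanSpace_fin]

end Graph

theorem graph_nontangential_half_sum
    (n : ℕ) (hn : 1 ≤ n)
    (K Ω : EuclideanSpace ℝ (Fin (n + 1)) → ℝ) (C : ℝ)
    (hΩhom : ∀ x : EuclideanSpace ℝ (Fin (n + 1)), x ≠ 0 → ∀ t : ℝ, 0 < t → Ω (t • x) = Ω x)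
    (hKform : ∀ x : EuclideanSpace ℝ (Fin (n + 1)), x ≠ 0 → K x = Ω x / ‖x‖ ^ n)
    (hKodd : ∀ x : EuclideanSpace ℝ (Fin (n + 1)), K (-x) = -K x)
    (hKsmooth : ContDiffOn ℝ 2 K {(0 : EuclideanSpace ℝ (Fin (n + 1)))}ᶜ)
    (hKbound : ∀ j ≤ 2, ∀ x : EuclideanSpace ℝ (Fin (n + 1)), x ≠ 0 →
      ‖iteratedFDerivWithin ℝ j K {(0 : EuclideanSpace ℝ (Fin (n + 1)))}ᶜ x‖ ≤ C / ‖x‖ ^ (n + j))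
    (A : EuclideanSpace ℝ (Fin n) → ℝ) (hA : ContDiff ℝ 1 A)
    (hslope : ∀ z, ‖gradient A z‖ ≤ 1 / 10)
    (Γ : Set (EuclideanSpace ℝ (Fin (n + 1)))) (hΓ : Γ = Set.range (graphMap A))
    (μ : Measure (EuclideanSpace ℝ (Fin (n + 1)))) (hμ : μ = μH[n].restrict Γ)
    (N : EuclideanSpace ℝ (Fin n) → EuclideanSpace ℝ (Fin (n + 1)))
    (hN : ∀ z, ‖N z‖ = 1 ∧
      ∀ v : EuclideanSpace ℝ (Fin n), ⟪fderiv ℝ (graphMap A) z v, N z⟫ = 0)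
    (g : EuclideanSpace ℝ (Fin (n + 1)) → ℝ) (hg : ContDiff ℝ 1 g)
    (hgc : HasCompactSupport g)
    (a b : ℝ) (ha : a ∈ Set.Ioo (0 : ℝ) 1) (hb : b ∈ Set.Ioo 0 a)
    (z : EuclideanSpace ℝ (Fin n)) (x : EuclideanSpace ℝ (Fin (n + 1)))
    (hx : x = graphMap A z)
    (p : ℝ) (hpv : Tendsto (fun ε => TepsDen K μ g ε x) (𝓝[>] (0 : ℝ)) (𝓝 p)) :
    Tendsto (fun y =>
        (TepsDen K μ g (b * dist x y) y + TepsDen K μ g (b * dist x y) ((2 : ℝ) • x - y)) / 2)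
      (𝓝[cone a x (N z)] x) (𝓝 p) := by
  subst hx hΓ
  have hK : IsOddCalderonZygmundKernel n C K :=
    .of_eq_div_norm_pow hΩhom hKform hKodd (hKsmooth.of_le one_le_two)
      fun j hj ↦ hKbound j (hj.trans one_le_two)
  have hlip : LipschitzWith (1 / 10) A :=
    lipschitzWith_of_norm_gradient_le (hA.differentiable one_ne_zero) (by simpa using hslope)
  have : IsFiniteMeasureOnCompacts μ := hμ ▸ isFiniteMeasureOnCompacts_restrict_range_graphMap hlip
  obtain ⟨M, hM⟩ := hgc.exists_bound_of_continuous hg.continuous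
  exact graph_nontangential_half_sum_general hK hlip
    (hA.contDiffAt.hasStrictFDerivAt one_ne_zero) (hN z).1 (hN z).2 hμ
    (hg.continuous.integrable_of_hasCompactSupport hgc) hM hg.continuous.continuousAt hb.1 hb.2 hpv
end
end

section
/- Let n ≥ 1 and let K : ℝ^{n+1} → ℝ be an odd kernel of the form K(x) = Ω(x)/|x|^n with Ω homogeneous of degree 0, satisfying |K(x)| ≤ C/|x|^n and |∇K(x)| ≤ C/|x|^{n+1} for x ≠ 0. Let L ⊂ ℝ^{n+1} be an affine hyperplane through a point x with unit normal N. Then for every t > 0 the integral ∫_L (K(x + tN − z) − K(x − tN − z)) dH^n(z) converges absolutely and equals 2 C_K(N), where C_K(N) = ∫_{L(N)} (Ω(y+N) − Ω(y−N))/(2(|y|² + 1)^{n/2}) dH^n(y) and L(N) is the hyperplane through the origin orthogonal to N. In particular, the value is independent of t and of x. -/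
open MeasureTheory Metric Filter Set
open scoped ENNReal NNReal Topology RealInnerProductSpace

noncomputable section

/-!
The map `w ↦ x + w` carries the orthogonal complement of `N` isometrically onto the hyperplane,
and turns the integrand into `K (tN - w) - K (-tN - w)`. As `K` is homogeneous of degree `-n` and
the complement has dimension `n`, the substitution `w = -t y` replaces it by
`K (y + N) - K (y - N)`: the factor `t ^ (-n)` from `K` cancels the Jacobian. The latter difference
is continuous in `y`, and by the mean value inequality on the segment from `y - N` to `y + N`, all
of whose points have norm at least `‖y‖`, it is `O(‖y‖ ^ (-n - 1))`, hence integrable.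
-/

section Orthogonal

variable {E : Type*} [NormedAddCommGroup E] [InnerProductSpace ℝ E]

theorem norm_add_sq_of_inner_eq_zero {y v : E} (h : ⟪y, v⟫ = 0) :
    ‖y + v‖ ^ 2 = ‖y‖ ^ 2 + ‖v‖ ^ 2 := by
  simpa only [sq] using norm_add_sq_eq_norm_sq_add_norm_sq_of_inner_eq_zero y v h

theorem norm_add_pow_eq_rpow_of_inner_eq_zero {y v : E} (h : ⟪y, v⟫ = 0) (n : ℕ) :
    ‖y + v‖ ^ n = (‖y‖ ^ 2 + ‖v‖ ^ 2) ^ ((n : ℝ) / 2) := by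
  rw [← norm_add_sq_of_inner_eq_zero h, ← Real.rpow_natCast_mul (norm_nonneg _),
    Nat.cast_two, mul_div_cancel₀ _ two_ne_zero, Real.rpow_natCast]

theorem norm_le_norm_add_of_inner_eq_zero {y v : E} (h : ⟪y, v⟫ = 0) : ‖y‖ ≤ ‖y + v‖ := by
  refine le_of_sq_le_sq ?_ (norm_nonneg _)
  rw [norm_add_sq_of_inner_eq_zero h]
  exact le_add_of_nonneg_right (sq_nonneg _)

theorem add_ne_zero_of_inner_eq_zero {y v : E} (h : ⟪y, v⟫ = 0) (hv : v ≠ 0) : y + v ≠ 0 := by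
  rw [add_comm]
  exact norm_pos_iff.1 ((norm_pos_iff.2 hv).trans_le
    (norm_le_norm_add_of_inner_eq_zero (by rwa [real_inner_comm])))

theorem sub_ne_zero_of_inner_eq_zero {y v : E} (h : ⟪y, v⟫ = 0) (hv : v ≠ 0) : y - v ≠ 0 := by
  rw [sub_eq_add_neg]
  exact add_ne_zero_of_inner_eq_zero (by rw [inner_neg_right, h, neg_zero]) (neg_ne_zero.2 hv)

theorem norm_le_norm_of_mem_segment_sub_add {y v z : E} (h : ⟪y, v⟫ = 0)
    (hz : z ∈ segment ℝ (y - v) (y + v)) : ‖y‖ ≤ ‖z‖ := by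
  obtain ⟨a, b, -, -, hab, rfl⟩ := hz
  have hz : a • (y - v) + b • (y + v) = y + (b - a) • v := by
    rw [← sub_eq_of_eq_add' hab.symm]
    module
  rw [hz]
  exact norm_le_norm_add_of_inner_eq_zero (by rw [inner_smul_right, h, mul_zero])

end Orthogonal

theorem measurableEmbedding_add_coe {G : Type*} [AddGroup G] [MeasurableSpace G] [MeasurableAdd G]
    {s : Set G} (hs : MeasurableSet s) (x : G) : MeasurableEmbedding (fun y : s => x + (y : G)) :=
  (measurableEmbedding_addLeft x).comp (.subtype_coe hs)

section Hyperplane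

variable {E : Type*} [NormedAddCommGroup E] [InnerProductSpace ℝ E]

theorem range_add_orthogonal_span_singleton (x N : E) :
    range (fun w : (ℝ ∙ N)ᗮ => x + (w : E)) = {z | ⟪z - x, N⟫ = 0} := by
  ext z
  constructor
  · rintro ⟨w, rfl⟩
    simpa using Submodule.mem_orthogonal_singleton_iff_inner_left.1 w.2
  · intro hz
    exact ⟨⟨z - x, Submodule.mem_orthogonal_singleton_iff_inner_left.2 hz⟩, add_sub_cancel x z⟩

variable [MeasurableSpace E] [BorelSpace E]

theorem measurePreserving_add_orthogonal_span_singleton (x N : E) {d : ℝ} (hd : 0 ≤ d) :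
    MeasurePreserving (fun w : (ℝ ∙ N)ᗮ => x + (w : E)) μH[d]
      (μH[d].restrict {z | ⟪z - x, N⟫ = 0}) := by
  have he : Isometry (fun w : (ℝ ∙ N)ᗮ => x + (w : E)) :=
    (IsometryEquiv.addLeft x).isometry.comp isometry_subtype_coe
  refine ⟨he.continuous.measurable, ?_⟩
  rw [he.map_hausdorffMeasure (Or.inl hd), range_add_orthogonal_span_singleton]

variable {F : Type*} [NormedAddCommGroup F]

theorem integrableOn_hyperplane_iff (x N : E) {d : ℝ} (hd : 0 ≤ d) (f : E → F) :
    IntegrableOn f {z | ⟪z - x, N⟫ = 0} μH[d] ↔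
      Integrable (fun w : (ℝ ∙ N)ᗮ => f (x + w)) μH[d] :=
  ((measurePreserving_add_orthogonal_span_singleton x N hd).integrable_comp_emb
    (measurableEmbedding_add_coe (Submodule.isClosed_orthogonal _).measurableSet x)).symm

theorem setIntegral_hyperplane [NormedSpace ℝ F] (x N : E) {d : ℝ} (hd : 0 ≤ d) (f : E → F) :
    ∫ z in {z | ⟪z - x, N⟫ = 0}, f z ∂μH[d] = ∫ w : (ℝ ∙ N)ᗮ, f (x + w) ∂μH[d] :=
  ((measurePreserving_add_orthogonal_span_singleton x N hd).integral_comp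
    (measurableEmbedding_add_coe (Submodule.isClosed_orthogonal _).measurableSet x) f).symm

end Hyperplane

theorem isAddHaarMeasure_hausdorffMeasure_of_finrank_eq {W : Type*} [NormedAddCommGroup W]
    [NormedSpace ℝ W] [FiniteDimensional ℝ W] [MeasurableSpace W] [BorelSpace W] {n : ℕ}
    (hW : Module.finrank ℝ W = n) : (μH[n] : Measure W).IsAddHaarMeasure :=
  hW ▸ isAddHaarMeasure_hausdorffMeasure

theorem inv_pow_finrank_smul_integral_comp_neg_inv_smul {W F : Type*} [NormedAddCommGroup W]
    [NormedSpace ℝ W] [FiniteDimensional ℝ W] [MeasurableSpace W] [BorelSpace W]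
    [NormedAddCommGroup F] [NormedSpace ℝ F] (μ : Measure W) [μ.IsAddHaarMeasure] (g : W → F)
    {t : ℝ} (ht : 0 < t) :
    (t ^ Module.finrank ℝ W)⁻¹ • ∫ w, g ((-t)⁻¹ • w) ∂μ = ∫ w, g w ∂μ := by
  rw [Measure.integral_comp_inv_smul, abs_pow, abs_neg, abs_of_pos ht,
    inv_smul_smul₀ (pow_pos ht _).ne']

theorem isBigO_cocompact_of_norm_le_div {E F : Type*} [NormedAddCommGroup E] [ProperSpace E]
    [SeminormedAddCommGroup F] {f : E → F} {C : ℝ} {m : ℕ}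
    (hf : ∀ y, y ≠ 0 → ‖f y‖ ≤ C / ‖y‖ ^ m) :
    f =O[cocompact E] fun y => (1 + ‖y‖) ^ (-(m : ℝ)) := by
  refine .of_bound (C * 2 ^ m) ?_
  filter_upwards [(tendsto_norm_cocompact_atTop (E := E)).eventually_ge_atTop 1] with y hy
  have hy_pos : 0 < ‖y‖ := zero_lt_one.trans_le hy
  have hC : 0 ≤ C := by
    simpa using (le_div_iff₀ (pow_pos hy_pos m)).1
      ((norm_nonneg _).trans (hf y (norm_pos_iff.1 hy_pos)))
  calc ‖f y‖ ≤ C / ‖y‖ ^ m := hf y (norm_pos_iff.1 hy_pos)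
    _ = C * 2 ^ m / (2 * ‖y‖) ^ m := by rw [mul_pow]; field_simp
    _ ≤ C * 2 ^ m / (1 + ‖y‖) ^ m := by gcongr; linarith
    _ = C * 2 ^ m * ‖(1 + ‖y‖) ^ (-(m : ℝ))‖ := by
      rw [Real.norm_of_nonneg (by positivity), Real.rpow_neg (by positivity), Real.rpow_natCast,
        div_eq_mul_inv]

section Decay

variable {E F : Type*} [NormedAddCommGroup E] [InnerProductSpace ℝ E]
  [NormedAddCommGroup F] [NormedSpace ℝ F]

theorem norm_add_sub_sub_le_of_norm_fderivWithin_le {K : E → F} {C : ℝ} {m : ℕ}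
    (hKdiff : DifferentiableOn ℝ K {0}ᶜ)
    (hKgrad : ∀ z, z ≠ 0 → ‖fderivWithin ℝ K {0}ᶜ z‖ ≤ C / ‖z‖ ^ m)
    {y v : E} (hy : y ≠ 0) (hyv : ⟪y, v⟫ = 0) :
    ‖K (y + v) - K (y - v)‖ ≤ C / ‖y‖ ^ m * ‖(2 : ℝ) • v‖ := by
  have hy_pos : 0 < ‖y‖ := norm_pos_iff.2 hy
  have hC : 0 ≤ C := by
    simpa using (le_div_iff₀ (pow_pos hy_pos m)).1 ((norm_nonneg _).trans (hKgrad y hy))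
  have hle : ∀ z ∈ segment ℝ (y - v) (y + v), ‖y‖ ≤ ‖z‖ :=
    fun z => norm_le_norm_of_mem_segment_sub_add hyv
  have hne : segment ℝ (y - v) (y + v) ⊆ {0}ᶜ :=
    fun z hz => norm_pos_iff.1 (hy_pos.trans_le (hle z hz))
  have hbound : ∀ z ∈ segment ℝ (y - v) (y + v),
      ‖fderivWithin ℝ K {0}ᶜ z‖ ≤ C / ‖y‖ ^ m := fun z hz =>
    (hKgrad z (hne hz)).trans (by have := hle z hz; gcongr)
  have hsub : y + v - (y - v) = (2 : ℝ) • v := by module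
  rw [← hsub]
  exact (convex_segment (𝕜 := ℝ) _ _).norm_image_sub_le_of_norm_hasFDerivWithin_le
    (fun z hz => (hKdiff z (hne hz)).hasFDerivWithinAt.mono hne) hbound
    (left_mem_segment _ _ _) (right_mem_segment _ _ _)

theorem integrable_add_sub_sub_of_norm_fderivWithin_le [MeasurableSpace E] [BorelSpace E]
    {W : Submodule ℝ E} [FiniteDimensional ℝ W] (μ : Measure W) [μ.IsAddHaarMeasure]
    {K : E → F} {C : ℝ} {m : ℕ} (hm : Module.finrank ℝ W < m)
    (hKdiff : DifferentiableOn ℝ K {0}ᶜ)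
    (hKgrad : ∀ z, z ≠ 0 → ‖fderivWithin ℝ K {0}ᶜ z‖ ≤ C / ‖z‖ ^ m)
    {v : E} (hv : v ≠ 0) (hvW : v ∈ Wᗮ) :
    Integrable (fun w : W => K (w + v) - K (w - v)) μ := by
  have horth : ∀ w : W, ⟪(w : E), v⟫ = 0 := fun w => hvW w w.2
  have hcont : Continuous fun w : W => K (w + v) - K (w - v) :=
    (hKdiff.continuousOn.comp_continuous (by fun_prop)
      fun w => add_ne_zero_of_inner_eq_zero (horth w) hv).sub
    (hKdiff.continuousOn.comp_continuous (by fun_prop)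
      fun w => sub_ne_zero_of_inner_eq_zero (horth w) hv)
  have hdecay : ∀ w : W, w ≠ 0 →
      ‖K (w + v) - K (w - v)‖ ≤ C * ‖(2 : ℝ) • v‖ / ‖w‖ ^ m := fun w hw =>
    (norm_add_sub_sub_le_of_norm_fderivWithin_le hKdiff hKgrad
      (by simpa using hw) (horth w)).trans_eq (div_mul_eq_mul_div _ _ _)
  exact hcont.locallyIntegrable.integrable_of_isBigO_cocompact
    (isBigO_cocompact_of_norm_le_div hdecay)
    ((integrable_one_add_norm (mod_cast hm)).integrableAtFilter _)

end Decay

section Homogeneous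

theorem kernel_smul_of_homogeneous
    {E F : Type*} [NormedAddCommGroup E] [NormedSpace ℝ E] [AddCommGroup F] [Module ℝ F]
    {K Ω : E → F} {n : ℕ}
    (hΩhom : ∀ z, z ≠ 0 → ∀ r : ℝ, 0 < r → Ω (r • z) = Ω z)
    (hKform : ∀ z, z ≠ 0 → K z = (‖z‖ ^ n)⁻¹ • Ω z) {z : E} (hz : z ≠ 0) {r : ℝ} (hr : 0 < r) :
    K (r • z) = (r ^ n)⁻¹ • K z := by
  rw [hKform _ (smul_ne_zero hr.ne' hz), hKform z hz, hΩhom z hz r hr, norm_smul_of_nonneg hr.le,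
    mul_pow, mul_inv, mul_smul]

variable {E F : Type*} [NormedAddCommGroup E] [InnerProductSpace ℝ E]
  [AddCommGroup F] [Module ℝ F]

theorem kernel_sub_eq_smul_of_inner_eq_zero {K Ω : E → F} {n : ℕ}
    (hKform : ∀ z, z ≠ 0 → K z = (‖z‖ ^ n)⁻¹ • Ω z) {y N : E} (hN : ‖N‖ = 1) (hy : ⟪y, N⟫ = 0) :
    K (y + N) - K (y - N) =
      ((‖y‖ ^ 2 + 1) ^ ((n : ℝ) / 2))⁻¹ • (Ω (y + N) - Ω (y - N)) := by
  have hN0 : N ≠ 0 := norm_ne_zero_iff.1 (hN ▸ one_ne_zero)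
  have hy' : ⟪y, -N⟫ = 0 := by rw [inner_neg_right, hy, neg_zero]
  have hnorm_add := norm_add_pow_eq_rpow_of_inner_eq_zero hy n
  have hnorm_sub := norm_add_pow_eq_rpow_of_inner_eq_zero hy' n
  rw [hN, one_pow] at hnorm_add
  rw [norm_neg, hN, one_pow, ← sub_eq_add_neg] at hnorm_sub
  rw [hKform _ (add_ne_zero_of_inner_eq_zero hy hN0),
    hKform _ (sub_ne_zero_of_inner_eq_zero hy hN0), hnorm_add, hnorm_sub, smul_sub]

theorem kernel_sub_hyperplane_eq {K : E → F} {n : ℕ}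
    (hKhom : ∀ z, z ≠ 0 → ∀ r : ℝ, 0 < r → K (r • z) = (r ^ n)⁻¹ • K z)
    (x : E) {w N : E} (hN : N ≠ 0) (hw : ⟪w, N⟫ = 0) {t : ℝ} (ht : 0 < t) :
    K (x + t • N - (x + w)) - K (x - t • N - (x + w)) =
      (t ^ n)⁻¹ • (K ((-t)⁻¹ • w + N) - K ((-t)⁻¹ • w - N)) := by
  have hy : ⟪(-t)⁻¹ • w, N⟫ = 0 := by rw [real_inner_smul_left, hw, mul_zero]
  have hsmul : t • (-t)⁻¹ • w = -w := by rw [inv_neg, neg_smul, smul_neg, smul_inv_smul₀ ht.ne']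
  rw [smul_sub, ← hKhom _ (add_ne_zero_of_inner_eq_zero hy hN) t ht,
    ← hKhom _ (sub_ne_zero_of_inner_eq_zero hy hN) t ht, smul_add, smul_sub, hsmul]
  congr 2 <;> abel

end Homogeneous

section HomogeneousHyperplane

variable {E F : Type*} [NormedAddCommGroup E] [InnerProductSpace ℝ E]
  [MeasurableSpace E] [BorelSpace E] [NormedAddCommGroup F] [NormedSpace ℝ F]
  {n : ℕ} {K : E → F} {N : E} {t : ℝ}

theorem setIntegral_hyperplane_kernel_sub (hE : Module.finrank ℝ E = n + 1)
    (hKhom : ∀ z, z ≠ 0 → ∀ r : ℝ, 0 < r → K (r • z) = (r ^ n)⁻¹ • K z)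
    (x : E) (hN : N ≠ 0) (ht : 0 < t) :
    ∫ z in {z | ⟪z - x, N⟫ = 0}, (K (x + t • N - z) - K (x - t • N - z)) ∂μH[n] =
      ∫ y in {y | ⟪y, N⟫ = 0}, (K (y + N) - K (y - N)) ∂μH[n] := by
  have : Fact (Module.finrank ℝ E = n + 1) := ⟨hE⟩
  have : FiniteDimensional ℝ E := .of_fact_finrank_eq_succ n
  have hW : Module.finrank ℝ (ℝ ∙ N)ᗮ = n := Submodule.finrank_orthogonal_span_singleton hN
  have := isAddHaarMeasure_hausdorffMeasure_of_finrank_eq hW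
  let g (w : (ℝ ∙ N)ᗮ) : F := K (w + N) - K (w - N)
  calc ∫ z in {z | ⟪z - x, N⟫ = 0}, (K (x + t • N - z) - K (x - t • N - z)) ∂μH[n]
    _ = ∫ w : (ℝ ∙ N)ᗮ, (t ^ n)⁻¹ • g ((-t)⁻¹ • w) ∂μH[n] := by
      rw [setIntegral_hyperplane x N n.cast_nonneg]
      exact integral_congr_ae (.of_forall fun w => kernel_sub_hyperplane_eq hKhom x hN
        (Submodule.mem_orthogonal_singleton_iff_inner_left.1 w.2) ht)
    _ = ∫ w : (ℝ ∙ N)ᗮ, g w ∂μH[n] := by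
      rw [integral_smul]
      simpa only [hW] using inv_pow_finrank_smul_integral_comp_neg_inv_smul μH[n] g ht
    _ = ∫ y in {y | ⟪y, N⟫ = 0}, (K (y + N) - K (y - N)) ∂μH[n] := by
      simpa only [sub_zero, zero_add] using (setIntegral_hyperplane 0 N n.cast_nonneg
        fun y => K (y + N) - K (y - N)).symm

theorem integrableOn_hyperplane_kernel_sub {C : ℝ} (hE : Module.finrank ℝ E = n + 1)
    (hKhom : ∀ z, z ≠ 0 → ∀ r : ℝ, 0 < r → K (r • z) = (r ^ n)⁻¹ • K z)
    (hKdiff : DifferentiableOn ℝ K {0}ᶜ)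
    (hKgrad : ∀ z, z ≠ 0 → ‖fderivWithin ℝ K {0}ᶜ z‖ ≤ C / ‖z‖ ^ (n + 1))
    (x : E) (hN : N ≠ 0) (ht : 0 < t) :
    IntegrableOn (fun z => K (x + t • N - z) - K (x - t • N - z)) {z | ⟪z - x, N⟫ = 0} μH[n] := by
  have : Fact (Module.finrank ℝ E = n + 1) := ⟨hE⟩
  have : FiniteDimensional ℝ E := .of_fact_finrank_eq_succ n
  have hW : Module.finrank ℝ (ℝ ∙ N)ᗮ = n := Submodule.finrank_orthogonal_span_singleton hN
  have := isAddHaarMeasure_hausdorffMeasure_of_finrank_eq hW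
  have h_integrable : Integrable (fun w : (ℝ ∙ N)ᗮ => K (w + N) - K (w - N)) μH[n] :=
    integrable_add_sub_sub_of_norm_fderivWithin_le _ (by omega) hKdiff hKgrad hN
      (Submodule.le_orthogonal_orthogonal _ (Submodule.mem_span_singleton_self N))
  rw [integrableOn_hyperplane_iff x N n.cast_nonneg]
  refine ((h_integrable.comp_smul (inv_ne_zero (neg_ne_zero.2 ht.ne'))).smul (t ^ n)⁻¹).congr
    (.of_forall fun w => ?_)
  exact (kernel_sub_hyperplane_eq hKhom x hN
    (Submodule.mem_orthogonal_singleton_iff_inner_left.1 w.2) ht).symm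

end HomogeneousHyperplane

theorem two_mul_CK (n : ℕ) (Ω : EuclideanSpace ℝ (Fin (n + 1)) → ℝ)
    (N : EuclideanSpace ℝ (Fin (n + 1))) :
    2 * CK n Ω N = ∫ y in {y | ⟪y, N⟫ = 0},
      ((‖y‖ ^ 2 + 1) ^ ((n : ℝ) / 2))⁻¹ • (Ω (y + N) - Ω (y - N)) ∂μH[n] := by
  rw [CK, ← integral_const_mul]
  refine integral_congr_ae (.of_forall fun y => ?_)
  simp only [smul_eq_mul]
  field_simp

theorem integral_over_hyperplane_eq_two_CK_general
    {E F : Type*} [NormedAddCommGroup E] [InnerProductSpace ℝ E]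
    [MeasurableSpace E] [BorelSpace E] [NormedAddCommGroup F] [NormedSpace ℝ F] [CompleteSpace F]
    {n : ℕ} (hE : Module.finrank ℝ E = n + 1) {K Ω : E → F} {C : ℝ}
    (hΩhom : ∀ z, z ≠ 0 → ∀ r : ℝ, 0 < r → Ω (r • z) = Ω z)
    (hKform : ∀ z, z ≠ 0 → K z = (‖z‖ ^ n)⁻¹ • Ω z)
    (hKdiff : DifferentiableOn ℝ K {0}ᶜ)
    (hKgrad : ∀ z, z ≠ 0 → ‖fderivWithin ℝ K {0}ᶜ z‖ ≤ C / ‖z‖ ^ (n + 1))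
    (x : E) {N : E} (hN : ‖N‖ = 1) {t : ℝ} (ht : 0 < t) :
    IntegrableOn (fun z => K (x + t • N - z) - K (x - t • N - z)) {z | ⟪z - x, N⟫ = 0} μH[n] ∧
    ∫ z in {z | ⟪z - x, N⟫ = 0}, (K (x + t • N - z) - K (x - t • N - z)) ∂μH[n] =
      ∫ y in {y | ⟪y, N⟫ = 0},
        ((‖y‖ ^ 2 + 1) ^ ((n : ℝ) / 2))⁻¹ • (Ω (y + N) - Ω (y - N)) ∂μH[n] := by
  have hN0 : N ≠ 0 := norm_ne_zero_iff.1 (hN ▸ one_ne_zero)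
  have hKhom : ∀ z, z ≠ 0 → ∀ r : ℝ, 0 < r → K (r • z) = (r ^ n)⁻¹ • K z :=
    fun z hz r => kernel_smul_of_homogeneous hΩhom hKform hz
  refine ⟨integrableOn_hyperplane_kernel_sub hE hKhom hKdiff hKgrad x hN0 ht, ?_⟩
  rw [setIntegral_hyperplane_kernel_sub hE hKhom x hN0 ht]
  exact setIntegral_congr_fun (isClosed_eq (by fun_prop) continuous_const).measurableSet
    fun y hy => kernel_sub_eq_smul_of_inner_eq_zero hKform hN hy

theorem integral_over_hyperplane_eq_two_CK
    (n : ℕ) (hn : 1 ≤ n)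
    (K Ω : EuclideanSpace ℝ (Fin (n + 1)) → ℝ) (C : ℝ)
    (hΩhom : ∀ x : EuclideanSpace ℝ (Fin (n + 1)), x ≠ 0 → ∀ t : ℝ, 0 < t → Ω (t • x) = Ω x)
    (hKform : ∀ x : EuclideanSpace ℝ (Fin (n + 1)), x ≠ 0 → K x = Ω x / ‖x‖ ^ n)
    (hKodd : ∀ x : EuclideanSpace ℝ (Fin (n + 1)), K (-x) = -K x)
    (hKbound : ∀ x : EuclideanSpace ℝ (Fin (n + 1)), x ≠ 0 → |K x| ≤ C / ‖x‖ ^ n)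
    (hKdiff : DifferentiableOn ℝ K {(0 : EuclideanSpace ℝ (Fin (n + 1)))}ᶜ)
    (hKgrad : ∀ x : EuclideanSpace ℝ (Fin (n + 1)), x ≠ 0 →
      ‖fderivWithin ℝ K {(0 : EuclideanSpace ℝ (Fin (n + 1)))}ᶜ x‖ ≤ C / ‖x‖ ^ (n + 1))
    (x N : EuclideanSpace ℝ (Fin (n + 1))) (hN : ‖N‖ = 1)
    (L : Set (EuclideanSpace ℝ (Fin (n + 1))))
    (hL : L = {z : EuclideanSpace ℝ (Fin (n + 1)) | ⟪z - x, N⟫ = 0})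
    (t : ℝ) (ht : 0 < t) :
    IntegrableOn (fun z => K (x + t • N - z) - K (x - t • N - z)) L μH[n] ∧
    ∫ z in L, (K (x + t • N - z) - K (x - t • N - z)) ∂μH[n] = 2 * CK n Ω N := by
  rw [hL, two_mul_CK]
  exact integral_over_hyperplane_eq_two_CK_general finrank_euclideanSpace_fin hΩhom
    (fun z hz => (hKform z hz).trans (div_eq_inv_mul _ _)) hKdiff hKgrad x hN ht
end
end

section
/- Let n ≥ 1 and let K : ℝ^{n+1} → ℝ be an odd kernel of the form K(x) = Ω(x)/|x|^n with Ω homogeneous of degree 0, satisfying |K(x)| ≤ C/|x|^n and |∇K(x)| ≤ C/|x|^{n+1} for x ≠ 0. Then for every unit vector N ∈ ℝ^{n+1}, the integral C_K(N) = ∫_{L(N)} (Ω(y+N) − Ω(y−N))/(2(|y|² + 1)^{n/2}) dH^n(y), where L(N) is the hyperplane through the origin orthogonal to N, converges absolutely, and there is a constant C' depending only on n and C such that |C_K(N)| ≤ C' for all unit vectors N. -/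
/-!
On the hyperplane `L(N)` one has `‖y ± N‖ ^ 2 = ‖y‖ ^ 2 + 1`, so the integrand is
`(K (y + N) - K (y - N)) / 2`. For `‖y‖ ≤ 1` it is at most `C`, by the size bound on `K`. For
`‖y‖ > 1` the mean value inequality on the half-space `{x | ‖y‖ ^ 2 ≤ ⟪y, x⟫}`, which contains
`y ± N` and lies outside the ball of radius `‖y‖`, gains a power of decay: the integrand is at most
`C / ‖y‖ ^ (n + 1)`. This is integrable on the `n`-dimensional space `L(N)`, with an integral
independent of `N` since all `n`-dimensional subspaces are isometric.
-/

open MeasureTheory Metric Filter Set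
open scoped ENNReal NNReal Topology RealInnerProductSpace

noncomputable section

section RadialIntegrals

variable {X Y F : Type*} [MetricSpace X] [CompleteSpace X] [MeasurableSpace X] [BorelSpace X]
  [MetricSpace Y] [MeasurableSpace Y] [BorelSpace Y] [NormedAddCommGroup F]

lemma integrableOn_range_isometry_iff {φ : X → Y} (hφ : Isometry φ) {d : ℝ} (hd : 0 ≤ d)
    {f : Y → F} :
    IntegrableOn f (range φ) μH[d] ↔ Integrable (f ∘ φ) μH[d] := by
  rw [IntegrableOn, ← hφ.map_hausdorffMeasure (.inl hd),
    hφ.isClosedEmbedding.measurableEmbedding.integrable_map_iff]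

lemma setIntegral_range_isometry [NormedSpace ℝ F] {φ : X → Y} (hφ : Isometry φ) {d : ℝ}
    (hd : 0 ≤ d) (f : Y → F) :
    ∫ y in range φ, f y ∂μH[d] = ∫ x, f (φ x) ∂μH[d] := by
  rw [← hφ.map_hausdorffMeasure (.inl hd),
    hφ.isClosedEmbedding.measurableEmbedding.integral_map]

variable {E : Type*} [NormedAddCommGroup E] [InnerProductSpace ℝ E]

lemma exists_linearIsometry_range_eq_submodule (V : Submodule ℝ E) [FiniteDimensional ℝ V] {n : ℕ}
    (hV : Module.finrank ℝ V = n) :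
    ∃ φ : EuclideanSpace ℝ (Fin n) →ₗᵢ[ℝ] E, range φ = V := by
  subst hV
  exact ⟨V.subtypeₗᵢ.comp (stdOrthonormalBasis ℝ V).repr.symm.toLinearIsometry, by
    simp [range_comp]⟩

variable [MeasurableSpace E] [BorelSpace E]

lemma integrableOn_submodule_radial_iff (V : Submodule ℝ E) [FiniteDimensional ℝ V] {n : ℕ}
    (hV : Module.finrank ℝ V = n) {d : ℝ} (hd : 0 ≤ d) {g : ℝ → F} :
    IntegrableOn (fun y => g ‖y‖) (V : Set E) μH[d] ↔
      Integrable (fun z : EuclideanSpace ℝ (Fin n) => g ‖z‖) μH[d] := by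
  obtain ⟨φ, hφ⟩ := exists_linearIsometry_range_eq_submodule V hV
  rw [← hφ, integrableOn_range_isometry_iff φ.isometry hd]
  simp only [Function.comp_def, φ.norm_map]

lemma setIntegral_submodule_radial [NormedSpace ℝ F] (V : Submodule ℝ E) [FiniteDimensional ℝ V]
    {n : ℕ} (hV : Module.finrank ℝ V = n) {d : ℝ} (hd : 0 ≤ d) (g : ℝ → F) :
    ∫ y in (V : Set E), g ‖y‖ ∂μH[d] = ∫ z : EuclideanSpace ℝ (Fin n), g ‖z‖ ∂μH[d] := by
  obtain ⟨φ, hφ⟩ := exists_linearIsometry_range_eq_submodule V hV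
  rw [← hφ, setIntegral_range_isometry φ.isometry hd]
  simp only [φ.norm_map]

end RadialIntegrals

lemma integrable_inv_one_add_norm_pow {E : Type*} [NormedAddCommGroup E] [NormedSpace ℝ E]
    [FiniteDimensional ℝ E] [MeasurableSpace E] [BorelSpace E] (μ : Measure E) [μ.IsAddHaarMeasure]
    {m : ℕ} (hm : Module.finrank ℝ E < m) :
    Integrable (fun x => ((1 + ‖x‖) ^ m)⁻¹) μ := by
  refine (integrable_one_add_norm (μ := μ) (r := m) (mod_cast hm)).congr (.of_forall fun x => ?_)
  simp only [Real.rpow_neg (show 0 ≤ 1 + ‖x‖ by positivity), Real.rpow_natCast]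

section DecayingKernels

variable {E F : Type*} [NormedAddCommGroup E] [InnerProductSpace ℝ E] [NormedAddCommGroup F]
  {N y : E}

lemma norm_add_sq_of_inner_eq_zero_of_norm_eq_one (hN : ‖N‖ = 1) (hy : ⟪y, N⟫ = 0) :
    ‖y + N‖ ^ 2 = ‖y‖ ^ 2 + 1 := by
  rw [norm_add_sq_real, hy, hN]
  ring

lemma norm_sub_sq_of_inner_eq_zero_of_norm_eq_one (hN : ‖N‖ = 1) (hy : ⟪y, N⟫ = 0) :
    ‖y - N‖ ^ 2 = ‖y‖ ^ 2 + 1 := by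
  rw [norm_sub_sq_real, hy, hN]
  ring

lemma one_le_norm_add_of_inner_eq_zero (hN : ‖N‖ = 1) (hy : ⟪y, N⟫ = 0) : 1 ≤ ‖y + N‖ := by
  refine (one_le_sq_iff₀ (norm_nonneg _)).1 ?_
  rw [norm_add_sq_of_inner_eq_zero_of_norm_eq_one hN hy]
  exact le_add_of_nonneg_left (sq_nonneg _)

lemma one_le_norm_sub_of_inner_eq_zero (hN : ‖N‖ = 1) (hy : ⟪y, N⟫ = 0) : 1 ≤ ‖y - N‖ := by
  refine (one_le_sq_iff₀ (norm_nonneg _)).1 ?_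
  rw [norm_sub_sq_of_inner_eq_zero_of_norm_eq_one hN hy]
  exact le_add_of_nonneg_left (sq_nonneg _)

lemma norm_le_of_norm_sq_le_inner {x : E} (hx : ‖y‖ ^ 2 ≤ ⟪y, x⟫) : ‖y‖ ≤ ‖x‖ := by
  rcases (norm_nonneg y).eq_or_lt with hy | hy
  · exact hy ▸ norm_nonneg x
  · exact le_of_mul_le_mul_left (by linarith [real_inner_le_norm y x]) hy

variable {K Ω : E → F} {C : ℝ} {m n : ℕ}

lemma continuousOn_sub_of_inner_eq_zero (hK : ContinuousOn K {0}ᶜ) (hN : ‖N‖ = 1) :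
    ContinuousOn (fun y => K (y + N) - K (y - N)) {y | ⟪y, N⟫ = 0} := by
  refine .sub (hK.comp (by fun_prop) fun y hy => ?_) (hK.comp (by fun_prop) fun y hy => ?_)
  · exact norm_pos_iff.1 (one_pos.trans_le (one_le_norm_add_of_inner_eq_zero hN hy))
  · exact norm_pos_iff.1 (one_pos.trans_le (one_le_norm_sub_of_inner_eq_zero hN hy))

variable [NormedSpace ℝ F]

lemma norm_sub_le_of_norm_fderivWithin_le_on_halfSpace (hd : DifferentiableOn ℝ K {0}ᶜ)
    (hg : ∀ x ≠ 0, ‖fderivWithin ℝ K {0}ᶜ x‖ ≤ C / ‖x‖ ^ m) (hy : y ≠ 0) {a b : E}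
    (ha : ‖y‖ ^ 2 ≤ ⟪y, a⟫) (hb : ‖y‖ ^ 2 ≤ ⟪y, b⟫) :
    ‖K b - K a‖ ≤ C / ‖y‖ ^ m * ‖b - a‖ := by
  have hy' : 0 < ‖y‖ := norm_pos_iff.2 hy
  have hC : 0 ≤ C := by
    have := (norm_nonneg _).trans (hg y hy)
    rwa [le_div_iff₀ (by positivity), zero_mul] at this
  have hne : {x | ‖y‖ ^ 2 ≤ ⟪y, x⟫} ⊆ {0}ᶜ := fun x hx =>
    norm_pos_iff.1 (hy'.trans_le (norm_le_of_norm_sq_le_inner hx))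
  have hconvex : Convex ℝ {x | ‖y‖ ^ 2 ≤ ⟪y, x⟫} :=
    convex_halfSpace_ge (innerₗ E y).isLinear _
  refine hconvex.norm_image_sub_le_of_norm_hasFDerivWithin_le
    (fun x hx => (hd x (hne hx)).hasFDerivWithinAt.mono hne) (fun x hx => ?_) ha hb
  have hyx : ‖y‖ ≤ ‖x‖ := norm_le_of_norm_sq_le_inner hx
  exact (hg x (hne hx)).trans (by gcongr)

lemma norm_sub_le_div_one_add_norm_pow (hK : ∀ x, 1 ≤ ‖x‖ → ‖K x‖ ≤ C)
    (hd : DifferentiableOn ℝ K {0}ᶜ) (hg : ∀ x ≠ 0, ‖fderivWithin ℝ K {0}ᶜ x‖ ≤ C / ‖x‖ ^ m)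
    (hN : ‖N‖ = 1) (hy : ⟪y, N⟫ = 0) :
    ‖K (y + N) - K (y - N)‖ ≤ C * 2 ^ (m + 1) * ((1 + ‖y‖) ^ m)⁻¹ := by
  have hC : 0 ≤ C := (norm_nonneg _).trans (hK N hN.ge)
  rw [← div_eq_mul_inv]
  rcases le_or_gt ‖y‖ 1 with hy1 | hy1
  · calc ‖K (y + N) - K (y - N)‖
        ≤ C + C := norm_sub_le_of_le (hK _ (one_le_norm_add_of_inner_eq_zero hN hy))
          (hK _ (one_le_norm_sub_of_inner_eq_zero hN hy))
      _ = C * 2 ^ (m + 1) / (1 + 1) ^ m := by rw [one_add_one_eq_two]; field_simp; ring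
      _ ≤ C * 2 ^ (m + 1) / (1 + ‖y‖) ^ m := by gcongr
  · have hy0 : y ≠ 0 := norm_pos_iff.1 (one_pos.trans hy1)
    calc ‖K (y + N) - K (y - N)‖
        ≤ C / ‖y‖ ^ m * ‖y + N - (y - N)‖ :=
          norm_sub_le_of_norm_fderivWithin_le_on_halfSpace hd hg hy0
            (by rw [inner_sub_right, hy, real_inner_self_eq_norm_sq, sub_zero])
            (by rw [inner_add_right, hy, real_inner_self_eq_norm_sq, add_zero])
      _ = C * 2 ^ (m + 1) / (‖y‖ + ‖y‖) ^ m := by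
          rw [add_sub_sub_cancel, ← two_smul ℝ N, norm_smul, hN, ← two_mul, mul_pow]
          field_simp
          norm_num
          ring
      _ ≤ C * 2 ^ (m + 1) / (1 + ‖y‖) ^ m := by gcongr

lemma smul_sub_eq_inv_two_smul_kernel_sub (hΩ : ∀ x ≠ 0, K x = (‖x‖ ^ n)⁻¹ • Ω x)
    (hN : ‖N‖ = 1) (hy : ⟪y, N⟫ = 0) :
    (2 * (‖y‖ ^ 2 + 1) ^ ((n : ℝ) / 2))⁻¹ • (Ω (y + N) - Ω (y - N)) =
      (2 : ℝ)⁻¹ • (K (y + N) - K (y - N)) := by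
  have kernel_eq {x : E} (hx : ‖x‖ ^ 2 = ‖y‖ ^ 2 + 1) :
      K x = ((‖y‖ ^ 2 + 1) ^ ((n : ℝ) / 2))⁻¹ • Ω x := by
    have hx0 : x ≠ 0 := by
      rintro rfl
      rw [norm_zero] at hx
      nlinarith
    rw [hΩ x hx0, ← hx, Real.rpow_div_two_eq_sqrt _ (sq_nonneg _), Real.sqrt_sq (norm_nonneg x),
      Real.rpow_natCast]
  rw [kernel_eq (norm_add_sq_of_inner_eq_zero_of_norm_eq_one hN hy),
    kernel_eq (norm_sub_sq_of_inner_eq_zero_of_norm_eq_one hN hy), ← smul_sub, smul_smul, mul_inv]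

variable [MeasurableSpace E] [BorelSpace E]

lemma integrableOn_and_norm_setIntegral_kernel_sub_le (hE : Module.finrank ℝ E = n + 1)
    (hm : n < m) (hK : ∀ x, 1 ≤ ‖x‖ → ‖K x‖ ≤ C) (hd : DifferentiableOn ℝ K {0}ᶜ)
    (hg : ∀ x ≠ 0, ‖fderivWithin ℝ K {0}ᶜ x‖ ≤ C / ‖x‖ ^ m) (hN : ‖N‖ = 1) :
    IntegrableOn (fun y => K (y + N) - K (y - N)) {y | ⟪y, N⟫ = 0} μH[n] ∧
      ‖∫ y in {y | ⟪y, N⟫ = 0}, (K (y + N) - K (y - N)) ∂μH[n]‖ ≤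
        C * 2 ^ (m + 1) * ∫ z : EuclideanSpace ℝ (Fin n), ((1 + ‖z‖) ^ m)⁻¹ ∂μH[n] := by
  have : FiniteDimensional ℝ E := .of_finrank_eq_succ hE
  have : Fact (Module.finrank ℝ E = n + 1) := ⟨hE⟩
  have hL : {y | ⟪y, N⟫ = 0} = ((ℝ ∙ N)ᗮ : Set E) :=
    Set.ext fun _ => Submodule.mem_orthogonal_singleton_iff_inner_left.symm
  have hLmeas : MeasurableSet {y | ⟪y, N⟫ = 0} :=
    hL ▸ (Submodule.isClosed_orthogonal _).measurableSet
  have hfinrank : Module.finrank ℝ (ℝ ∙ N)ᗮ = n :=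
    Submodule.finrank_orthogonal_span_singleton (norm_ne_zero_iff.1 (hN ▸ one_ne_zero))
  have hhaar : (μH[n] : Measure (EuclideanSpace ℝ (Fin n))).IsAddHaarMeasure := by
    simpa using isAddHaarMeasure_hausdorffMeasure (E := EuclideanSpace ℝ (Fin n))
  have hbound : IntegrableOn (fun y => C * 2 ^ (m + 1) * ((1 + ‖y‖) ^ m)⁻¹)
      {y | ⟪y, N⟫ = 0} μH[n] := by
    rw [hL]
    refine .const_mul ((integrableOn_submodule_radial_iff (g := fun r => ((1 + r) ^ m)⁻¹)
      _ hfinrank n.cast_nonneg).2 ?_) _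
    exact integrable_inv_one_add_norm_pow _ (by simpa using hm)
  have hle : ∀ᵐ y ∂μH[n].restrict {y | ⟪y, N⟫ = 0},
      ‖K (y + N) - K (y - N)‖ ≤ C * 2 ^ (m + 1) * ((1 + ‖y‖) ^ m)⁻¹ :=
    ae_restrict_of_forall_mem hLmeas fun _ => norm_sub_le_div_one_add_norm_pow hK hd hg hN
  refine ⟨hbound.mono' ((continuousOn_sub_of_inner_eq_zero hd.continuousOn hN).aestronglyMeasurable
    hLmeas) hle, (norm_integral_le_of_norm_le hbound hle).trans_eq ?_⟩
  rw [integral_const_mul, hL, setIntegral_submodule_radial _ hfinrank n.cast_nonneg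
    fun r => ((1 + r) ^ m)⁻¹]

theorem CK_integrable_and_uniformly_bounded_general (hE : Module.finrank ℝ E = n + 1)
    (hΩ : ∀ x ≠ 0, K x = (‖x‖ ^ n)⁻¹ • Ω x) (hK : ∀ x ≠ 0, ‖K x‖ ≤ C / ‖x‖ ^ n)
    (hd : DifferentiableOn ℝ K {0}ᶜ)
    (hg : ∀ x ≠ 0, ‖fderivWithin ℝ K {0}ᶜ x‖ ≤ C / ‖x‖ ^ (n + 1)) (hN : ‖N‖ = 1) :
    IntegrableOn (fun y => (2 * (‖y‖ ^ 2 + 1) ^ ((n : ℝ) / 2))⁻¹ • (Ω (y + N) - Ω (y - N)))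
        {y | ⟪y, N⟫ = 0} μH[n] ∧
      ‖∫ y in {y | ⟪y, N⟫ = 0},
          (2 * (‖y‖ ^ 2 + 1) ^ ((n : ℝ) / 2))⁻¹ • (Ω (y + N) - Ω (y - N)) ∂μH[n]‖ ≤
        C * 2 ^ (n + 1) *
          ∫ z : EuclideanSpace ℝ (Fin n), ((1 + ‖z‖) ^ (n + 1))⁻¹ ∂μH[n] := by
  have hLmeas : MeasurableSet {y | ⟪y, N⟫ = 0} :=
    (isClosed_eq (by fun_prop) continuous_const).measurableSet
  have hcongr : EqOn (fun y => (2 * (‖y‖ ^ 2 + 1) ^ ((n : ℝ) / 2))⁻¹ • (Ω (y + N) - Ω (y - N)))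
      (fun y => (2 : ℝ)⁻¹ • (K (y + N) - K (y - N))) {y | ⟪y, N⟫ = 0} :=
    fun _ hy => smul_sub_eq_inv_two_smul_kernel_sub hΩ hN hy
  have hK' (x : E) (hx : 1 ≤ ‖x‖) : ‖K x‖ ≤ C := by
    have hKx := hK x (norm_pos_iff.1 (one_pos.trans_le hx))
    rw [le_div_iff₀ (by positivity)] at hKx
    exact (le_mul_of_one_le_right (norm_nonneg _) (one_le_pow₀ hx)).trans hKx
  obtain ⟨hint, hbound⟩ :=
    integrableOn_and_norm_setIntegral_kernel_sub_le hE (Nat.lt_add_one n) hK' hd hg hN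
  rw [integrableOn_congr_fun hcongr hLmeas, setIntegral_congr_fun hLmeas hcongr, integral_smul,
    norm_smul, norm_inv, Real.norm_two]
  refine ⟨hint.smul _, (mul_le_mul_of_nonneg_left hbound (by positivity)).trans_eq ?_⟩
  ring

end DecayingKernels

theorem CK_integrable_and_uniformly_bounded
    (n : ℕ) (hn : 1 ≤ n) (C : ℝ) (hC : 0 < C) :
    ∃ C' : ℝ, 0 < C' ∧
      ∀ (K Ω : EuclideanSpace ℝ (Fin (n + 1)) → ℝ),
        (∀ x : EuclideanSpace ℝ (Fin (n + 1)), x ≠ 0 → ∀ t : ℝ, 0 < t → Ω (t • x) = Ω x) →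
        (∀ x : EuclideanSpace ℝ (Fin (n + 1)), x ≠ 0 → K x = Ω x / ‖x‖ ^ n) →
        (∀ x : EuclideanSpace ℝ (Fin (n + 1)), K (-x) = -K x) →
        (∀ x : EuclideanSpace ℝ (Fin (n + 1)), x ≠ 0 → |K x| ≤ C / ‖x‖ ^ n) →
        DifferentiableOn ℝ K {(0 : EuclideanSpace ℝ (Fin (n + 1)))}ᶜ →
        (∀ x : EuclideanSpace ℝ (Fin (n + 1)), x ≠ 0 →
          ‖fderivWithin ℝ K {(0 : EuclideanSpace ℝ (Fin (n + 1)))}ᶜ x‖ ≤ C / ‖x‖ ^ (n + 1)) →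
        ∀ N : EuclideanSpace ℝ (Fin (n + 1)), ‖N‖ = 1 →
          IntegrableOn
            (fun y => (Ω (y + N) - Ω (y - N)) / (2 * (‖y‖ ^ 2 + 1) ^ ((n : ℝ) / 2)))
            {y : EuclideanSpace ℝ (Fin (n + 1)) | ⟪y, N⟫ = 0} μH[n] ∧
          |CK n Ω N| ≤ C' :=
  ⟨max 1 (C * 2 ^ (n + 1) * ∫ z : EuclideanSpace ℝ (Fin n), ((1 + ‖z‖) ^ (n + 1))⁻¹ ∂μH[n]),
    by positivity, fun K Ω _ hΩ _ hK hd hg N hN => by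
      simpa only [CK, smul_eq_mul, Real.norm_eq_abs, inv_mul_eq_div] using
        (CK_integrable_and_uniformly_bounded_general finrank_euclideanSpace_fin
          (fun x hx => (hΩ x hx).trans (div_eq_inv_mul _ _)) hK hd hg hN).imp_right
            le_max_of_le_right⟩
end
end

section
/- For every integer n ≥ 1, ∫_{ℝ^n} (|y|² + 1)^{−(n+1)/2} dy = π^{(n+1)/2} / Γ((n+1)/2), where the integral is with respect to n-dimensional Lebesgue measure and Γ denotes the Gamma function. -/
open MeasureTheory Real

/-!
Write `a ^ (-s) * Γ(s)` as `∫ t > 0, t ^ (s - 1) * e ^ (-a t)` with `a = ‖y‖ ^ 2 + b` and integrate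
over `y` first. The inner integral is a Gaussian, equal to `(π / t) ^ (d / 2) * e ^ (-b t)` in
dimension `d`, and what remains in `t` is again a Gamma integral, with parameter `s - d / 2`.
The exponent `s = (d + 1) / 2` makes this parameter `1 / 2`, and `Γ(1 / 2) = √π`.
-/

theorem integral_rpow_sub_one_mul_exp_neg_mul_Ioi {a s : ℝ} (ha : 0 < a) (hs : 0 < s) :
    ∫ t in Set.Ioi 0, t ^ (s - 1) * exp (-(a * t)) = a ^ (-s) * Gamma s := by
  rw [integral_rpow_mul_exp_neg_mul_Ioi hs ha, one_div, inv_rpow ha.le, rpow_neg ha.le]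

theorem integrableOn_rpow_sub_one_mul_exp_neg_mul_Ioi {a s : ℝ} (ha : 0 < a) (hs : 0 < s) :
    IntegrableOn (fun t ↦ t ^ (s - 1) * exp (-(a * t))) (Set.Ioi 0) := by
  refine Integrable.of_integral_ne_zero ?_
  rw [integral_rpow_sub_one_mul_exp_neg_mul_Ioi ha hs]
  positivity

section LaplaceTransform

variable {X : Type*} [MeasurableSpace X] {μ : Measure X} [SFinite μ] {f : X → ℝ} {s : ℝ}

theorem integrable_prod_rpow_mul_exp_neg_mul (hf : AEMeasurable f μ)
    (hexp : ∀ t, 0 < t → Integrable (fun x ↦ exp (-(f x * t))) μ)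
    (hint : IntegrableOn (fun t ↦ t ^ s * ∫ x, exp (-(f x * t)) ∂μ) (Set.Ioi 0)) :
    Integrable (fun p : X × ℝ ↦ p.2 ^ s * exp (-(f p.1 * p.2)))
      (μ.prod (volume.restrict (Set.Ioi 0))) := by
  have hmeas : AEMeasurable (fun p : X × ℝ ↦ p.2 ^ s * exp (-(f p.1 * p.2)))
      (μ.prod (volume.restrict (Set.Ioi 0))) := by
    have := hf.comp_fst (ν := volume.restrict (Set.Ioi (0 : ℝ)))
    fun_prop
  refine (integrable_prod_iff' hmeas.aestronglyMeasurable).2 ⟨?_, ?_⟩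
  · filter_upwards [ae_restrict_mem measurableSet_Ioi] with t ht
    exact (hexp t ht).const_mul _
  · refine hint.congr_fun (fun t (ht : 0 < t) ↦ ?_) measurableSet_Ioi
    have hnorm (x : X) : ‖t ^ s * exp (-(f x * t))‖ = t ^ s * exp (-(f x * t)) :=
      norm_of_nonneg (by positivity)
    simp only [hnorm, integral_const_mul]

theorem integral_rpow_neg_mul_Gamma (hs : 0 < s) (hf : AEMeasurable f μ)
    (hpos : ∀ᵐ x ∂μ, 0 < f x)
    (hexp : ∀ t, 0 < t → Integrable (fun x ↦ exp (-(f x * t))) μ)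
    (hint : IntegrableOn (fun t ↦ t ^ (s - 1) * ∫ x, exp (-(f x * t)) ∂μ) (Set.Ioi 0)) :
    (∫ x, f x ^ (-s) ∂μ) * Gamma s =
      ∫ t in Set.Ioi 0, t ^ (s - 1) * ∫ x, exp (-(f x * t)) ∂μ := by
  calc
    (∫ x, f x ^ (-s) ∂μ) * Gamma s
      = ∫ x, (∫ t in Set.Ioi 0, t ^ (s - 1) * exp (-(f x * t))) ∂μ := by
        rw [← integral_mul_const]
        refine integral_congr_ae ?_
        filter_upwards [hpos] with x hx
        exact (integral_rpow_sub_one_mul_exp_neg_mul_Ioi hx hs).symm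
    _ = ∫ t in Set.Ioi 0, ∫ x, t ^ (s - 1) * exp (-(f x * t)) ∂μ :=
        integral_integral_swap (integrable_prod_rpow_mul_exp_neg_mul hf hexp hint)
    _ = ∫ t in Set.Ioi 0, t ^ (s - 1) * ∫ x, exp (-(f x * t)) ∂μ := by
        simp only [integral_const_mul]

end LaplaceTransform

section Gaussian

variable {V : Type*} [NormedAddCommGroup V] [InnerProductSpace ℝ V] [FiniteDimensional ℝ V]
  [MeasurableSpace V] [BorelSpace V]

theorem integral_exp_neg_normSq_add_mul (b : ℝ) {t : ℝ} (ht : 0 < t) :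
    ∫ y : V, exp (-((‖y‖ ^ 2 + b) * t)) =
      (π / t) ^ (Module.finrank ℝ V / 2 : ℝ) * exp (-(b * t)) := by
  have hsplit (y : V) :
      exp (-((‖y‖ ^ 2 + b) * t)) = exp (-t * ‖y‖ ^ 2) * exp (-(b * t)) := by
    rw [← exp_add]
    ring_nf
  simp only [hsplit, integral_mul_const, GaussianFourier.integral_rexp_neg_mul_sq_norm ht]

theorem integrable_exp_neg_normSq_add_mul (b : ℝ) {t : ℝ} (ht : 0 < t) :
    Integrable fun y : V ↦ exp (-((‖y‖ ^ 2 + b) * t)) := by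
  refine .of_integral_ne_zero ?_
  rw [integral_exp_neg_normSq_add_mul b ht]
  positivity

theorem rpow_sub_one_mul_integral_exp_neg_normSq_add_mul (b s : ℝ) {t : ℝ} (ht : 0 < t) :
    t ^ (s - 1) * ∫ y : V, exp (-((‖y‖ ^ 2 + b) * t)) =
      π ^ (Module.finrank ℝ V / 2 : ℝ) *
        (t ^ (s - Module.finrank ℝ V / 2 - 1) * exp (-(b * t))) := by
  rw [integral_exp_neg_normSq_add_mul b ht, div_rpow pi_pos.le ht.le, sub_right_comm,
    rpow_sub ht (s - 1)]
  ring

theorem integral_one_add_normSq_rpow_neg_general {b s : ℝ} (hb : 0 < b)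
    (hs : (Module.finrank ℝ V / 2 : ℝ) < s) :
    ∫ y : V, (‖y‖ ^ 2 + b) ^ (-s) =
      π ^ (Module.finrank ℝ V / 2 : ℝ) * b ^ (Module.finrank ℝ V / 2 - s) *
        Gamma (s - Module.finrank ℝ V / 2) / Gamma s := by
  have hs' : 0 < s - Module.finrank ℝ V / 2 := sub_pos.2 hs
  have hs₀ : 0 < s := lt_of_le_of_lt (by positivity) hs
  have hinner : Set.EqOn (fun t ↦ t ^ (s - 1) * ∫ y : V, exp (-((‖y‖ ^ 2 + b) * t)))
      (fun t ↦ π ^ (Module.finrank ℝ V / 2 : ℝ) *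
        (t ^ (s - Module.finrank ℝ V / 2 - 1) * exp (-(b * t)))) (Set.Ioi 0) :=
    fun _ ht ↦ rpow_sub_one_mul_integral_exp_neg_normSq_add_mul b s ht
  have hint : IntegrableOn (fun t ↦ t ^ (s - 1) * ∫ y : V, exp (-((‖y‖ ^ 2 + b) * t)))
      (Set.Ioi 0) :=
    IntegrableOn.congr_fun ((integrableOn_rpow_sub_one_mul_exp_neg_mul_Ioi hb hs').const_mul _)
      hinner.symm measurableSet_Ioi
  rw [eq_div_iff (Gamma_pos_of_pos hs₀).ne',
    integral_rpow_neg_mul_Gamma hs₀ (by fun_prop) (.of_forall fun y ↦ by positivity)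
      (fun _ ht ↦ integrable_exp_neg_normSq_add_mul b ht) hint,
    setIntegral_congr_fun measurableSet_Ioi hinner, integral_const_mul,
    integral_rpow_sub_one_mul_exp_neg_mul_Ioi hb hs', neg_sub, mul_assoc]

end Gaussian

theorem integral_one_add_normSq_rpow_neg
    (n : ℕ) (hn : 1 ≤ n) :
    ∫ y : EuclideanSpace ℝ (Fin n), (‖y‖ ^ 2 + 1) ^ (-(((n : ℝ) + 1) / 2))
      = Real.pi ^ (((n : ℝ) + 1) / 2) / Real.Gamma (((n : ℝ) + 1) / 2) := by
  rw [integral_one_add_normSq_rpow_neg_general one_pos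
    (by rw [finrank_euclideanSpace_fin]; linarith)]
  simp [-one_div, add_div, Gamma_one_half_eq, sqrt_eq_rpow, rpow_add pi_pos]
end

section
/- Let j ≥ 1 be an odd integer. Then ∫_ℝ ((1 + iy)^j − (iy − 1)^j) / (2 (1 + y²)^{(j+1)/2}) dy = (−1)^{(j−1)/2} π, where the integral is over the real line with respect to Lebesgue measure and the integrand is a complex-valued function of the real variable y. Consequently, for the planar kernel K(z) = z^j/|z|^{j+1} with Ω(z) = z^j/|z|^j, and any unit complex number N, the constant C_K(N) = ∫_{L(N)} (Ω(z+N) − Ω(z−N))/(2(|z|² + 1)^{1/2}) dH¹(z) equals (−1)^{(j−1)/2} π N^j, where L(N) = {t·iN : t ∈ ℝ} is the line through the origin orthogonal to N. -/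
open MeasureTheory Complex
open scoped ENNReal Topology

/-! Substituting `y = tan θ` gives `1 + i y = exp (i θ) / cos θ`, and for `j = 2 k + 1` the integral
becomes that of `cos ((2 k + 1) θ) / cos θ` over `(-π/2, π/2)`. Up to the sign `(-1) ^ k` this is
the Dirichlet kernel `1 + 2 ∑ cos (2 m φ)`, `1 ≤ m ≤ k`, at `φ = π/2 - θ`, all of whose non-constant
terms integrate to zero. For the constant `C_K(N)`, parametrize the line isometrically by
`t ↦ t i N`; then `z + N = N (1 + i t)` and `z - N = N (i t - 1)`, and multiplicativity of `Ω`
extracts the factor `N ^ j`.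
-/

section Integration

variable {E : Type*} [NormedAddCommGroup E] [NormedSpace ℝ E]

theorem integral_eq_setIntegral_Ioo_comp_tan (g : ℝ → E) :
    ∫ y, g y =
      ∫ θ in Set.Ioo (-(Real.pi / 2)) (Real.pi / 2), (Real.cos θ ^ 2)⁻¹ • g (Real.tan θ) := by
  rw [← setIntegral_univ, ← Real.image_tan_Ioo,
    integral_image_eq_integral_abs_deriv_smul measurableSet_Ioo
      (fun θ hθ ↦ (Real.hasDerivAt_tan_of_mem_Ioo hθ).hasDerivWithinAt) Real.injOn_tan]
  simp only [one_div, abs_inv, abs_pow, sq_abs]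

theorem setIntegral_range_hausdorffMeasure_of_isometry {X Y : Type*}
    [EMetricSpace X] [CompleteSpace X] [MeasurableSpace X] [BorelSpace X]
    [EMetricSpace Y] [MeasurableSpace Y] [BorelSpace Y] {φ : X → Y} (hφ : Isometry φ)
    {d : ℝ} (hd : 0 ≤ d) (f : Y → E) :
    ∫ z in Set.range φ, f z ∂μH[d] = ∫ x, f (φ x) ∂μH[d] := by
  rw [← hφ.map_hausdorffMeasure (Or.inl hd),
    hφ.isClosedEmbedding.measurableEmbedding.integral_map]

theorem setIntegral_line_hausdorffMeasure {F : Type*} [NormedAddCommGroup F] [NormedSpace ℝ F]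
    [MeasurableSpace F] [BorelSpace F] {v : F} (hv : ‖v‖ = 1) (f : F → E) :
    ∫ z in {z : F | ∃ t : ℝ, z = t • v}, f z ∂μH[1] = ∫ t : ℝ, f (t • v) := by
  have isometry_smul : Isometry fun t : ℝ ↦ t • v :=
    Isometry.of_dist_eq fun s t ↦ by
      rw [dist_eq_norm, dist_eq_norm, ← sub_smul, norm_smul, hv, mul_one]
  have line_eq_range : {z : F | ∃ t : ℝ, z = t • v} = Set.range fun t : ℝ ↦ t • v :=
    Set.ext fun _ ↦ exists_congr fun _ ↦ eq_comm
  rw [line_eq_range, setIntegral_range_hausdorffMeasure_of_isometry isometry_smul zero_le_one,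
    hausdorffMeasure_real]

end Integration

section DirichletKernel

theorem cos_odd_mul_eq_sum_mul_cos (k : ℕ) (θ : ℝ) :
    Real.cos ((2 * k + 1) * θ) =
      (-1) ^ k * (1 + 2 * ∑ m ∈ Finset.Icc 1 k, (-1) ^ m * Real.cos (2 * m * θ)) *
        Real.cos θ := by
  induction k with
  | zero => simp
  | succ k ih =>
    have cos_add_cos_odd : Real.cos ((2 * (k + 1 : ℕ) + 1) * θ) + Real.cos ((2 * k + 1) * θ) =
        2 * Real.cos (2 * (k + 1 : ℕ) * θ) * Real.cos θ := by
      rw [Real.cos_add_cos]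
      push_cast
      ring_nf
    have sign_sq : ((-1 : ℝ) ^ k) ^ 2 = 1 := by rw [← pow_mul, pow_mul', neg_one_sq, one_pow]
    rw [Finset.sum_Icc_succ_top (by omega)]
    linear_combination cos_add_cos_odd - ih -
      2 * Real.cos (2 * (k + 1 : ℕ) * θ) * Real.cos θ * sign_sq

theorem integral_cos_two_mul_mul {m : ℕ} (hm : m ≠ 0) :
    ∫ θ in -(Real.pi / 2)..Real.pi / 2, Real.cos (2 * m * θ) = 0 := by
  have endpoint : 2 * m * (Real.pi / 2) = m * Real.pi := by ring
  rw [intervalIntegral.integral_comp_mul_left _ (by positivity), integral_cos, mul_neg, endpoint,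
    Real.sin_neg, Real.sin_nat_mul_pi]
  simp

theorem setIntegral_cos_odd_mul_div_cos (k : ℕ) :
    ∫ θ in Set.Ioo (-(Real.pi / 2)) (Real.pi / 2), Real.cos ((2 * k + 1) * θ) / Real.cos θ =
      (-1) ^ k * Real.pi := by
  have sum_integral_eq_zero : ∫ θ in -(Real.pi / 2)..Real.pi / 2,
      ∑ m ∈ Finset.Icc 1 k, (-1) ^ m * Real.cos (2 * m * θ) = 0 := by
    rw [intervalIntegral.integral_finsetSum fun m _ ↦
      (by fun_prop : Continuous _).intervalIntegrable _ _]
    refine Finset.sum_eq_zero fun m hm ↦ ?_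
    rw [intervalIntegral.integral_const_mul,
      integral_cos_two_mul_mul (Nat.one_le_iff_ne_zero.mp (Finset.mem_Icc.mp hm).1), mul_zero]
  calc
    _ = ∫ θ in Set.Ioo (-(Real.pi / 2)) (Real.pi / 2),
          (-1) ^ k * (1 + 2 * ∑ m ∈ Finset.Icc 1 k, (-1) ^ m * Real.cos (2 * m * θ)) :=
      setIntegral_congr_fun measurableSet_Ioo fun θ hθ ↦ by
        simp only [cos_odd_mul_eq_sum_mul_cos k θ,
          mul_div_cancel_right₀ _ (Real.cos_pos_of_mem_Ioo hθ).ne']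
    _ = ∫ θ in -(Real.pi / 2)..Real.pi / 2,
          (-1) ^ k * (1 + 2 * ∑ m ∈ Finset.Icc 1 k, (-1) ^ m * Real.cos (2 * m * θ)) := by
      rw [intervalIntegral.integral_of_le (by linarith [Real.pi_pos]), integral_Ioc_eq_integral_Ioo]
    _ = (-1) ^ k * Real.pi := by
      rw [intervalIntegral.integral_const_mul, intervalIntegral.integral_add
          intervalIntegrable_const ((by fun_prop : Continuous _).intervalIntegrable _ _),
        intervalIntegral.integral_const_mul, sum_integral_eq_zero, intervalIntegral.integral_const]
      simp

end DirichletKernel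

section LineIntegral

theorem one_add_I_mul_tan_pow {z : ℂ} (hz : cos z ≠ 0) (n : ℕ) :
    (1 + I * tan z) ^ n = (cos (n * z) + sin (n * z) * I) / cos z ^ n := by
  rw [← cos_add_sin_mul_I_pow, ← div_pow, tan_eq_sin_div_cos, add_div, div_self hz]
  ring

theorem one_add_I_mul_tan_pow_sub_of_odd {z : ℂ} (hz : cos z ≠ 0) {n : ℕ} (hn : Odd n) :
    (1 + I * tan z) ^ n - (I * tan z - 1) ^ n = 2 * cos (n * z) / cos z ^ n := by
  have reflection : I * tan z - 1 = -(1 + I * tan (-z)) := by rw [tan_neg]; ring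
  rw [reflection, hn.neg_pow, one_add_I_mul_tan_pow hz, one_add_I_mul_tan_pow (by rwa [cos_neg])]
  simp only [mul_neg, cos_neg, sin_neg]
  ring

theorem integral_one_add_I_mul_pow_sub_div (k : ℕ) :
    ∫ y : ℝ, ((1 + I * y) ^ (2 * k + 1) - (I * y - 1) ^ (2 * k + 1)) /
        (2 * ((1 + y ^ 2 : ℝ) : ℂ) ^ (k + 1)) = (-1) ^ k * (Real.pi : ℂ) := by
  have integrand_comp_tan {θ : ℝ} (hθ : Real.cos θ ≠ 0) :
      (Real.cos θ ^ 2)⁻¹ •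
        (((1 + I * Real.tan θ) ^ (2 * k + 1) - (I * Real.tan θ - 1) ^ (2 * k + 1)) /
          (2 * ((1 + Real.tan θ ^ 2 : ℝ) : ℂ) ^ (k + 1))) =
      ((Real.cos ((2 * k + 1) * θ) / Real.cos θ : ℝ) : ℂ) := by
    have hθ' : cos (θ : ℂ) ≠ 0 := by exact_mod_cast hθ
    rw [ofReal_tan, one_add_I_mul_tan_pow_sub_of_odd hθ' (odd_two_mul_add_one k),
      ← inv_inv (1 + Real.tan θ ^ 2), Real.inv_one_add_tan_sq hθ, real_smul]
    push_cast
    rw [inv_pow]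
    field_simp
    ring
  rw [integral_eq_setIntegral_Ioo_comp_tan, setIntegral_congr_fun measurableSet_Ioo fun θ hθ ↦
      integrand_comp_tan (Real.cos_pos_of_mem_Ioo hθ).ne',
    integral_complex_ofReal, setIntegral_cos_odd_mul_div_cos]
  push_cast
  rfl

end LineIntegral

section AngularFactor

theorem norm_one_add_I_mul (t : ℝ) : ‖1 + I * t‖ = √(1 + t ^ 2) := by
  simpa [mul_comm] using norm_add_mul_I 1 t

theorem norm_I_mul_sub_one (t : ℝ) : ‖I * t - 1‖ = √(1 + t ^ 2) := by
  simpa [mul_comm, sub_eq_neg_add] using norm_add_mul_I (-1) t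

theorem angular_difference_quotient_eq {j : ℕ} {Ω : ℂ → ℂ}
    (hΩ : ∀ z : ℂ, z ≠ 0 → Ω z = z ^ j / ((‖z‖ : ℝ) : ℂ) ^ j) {N : ℂ} (hN : ‖N‖ = 1) (t : ℝ) :
    (Ω (t • (I * N) + N) - Ω (t • (I * N) - N)) / (2 * ((√(‖t • (I * N)‖ ^ 2 + 1) : ℝ) : ℂ)) =
      N ^ j * (((1 + I * t) ^ j - (I * t - 1) ^ j) /
        (2 * ((√(1 + t ^ 2) : ℝ) : ℂ) ^ (j + 1))) := by
  have Ω_mul {w : ℂ} (hw : ‖w‖ = √(1 + t ^ 2)) :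
      Ω (N * w) = N ^ j * w ^ j / ((√(1 + t ^ 2) : ℝ) : ℂ) ^ j := by
    have norm_mul_eq : ‖N * w‖ = √(1 + t ^ 2) := by rw [norm_mul, hN, one_mul, hw]
    have norm_pos : 0 < ‖N * w‖ := norm_mul_eq ▸ Real.sqrt_pos.mpr (by positivity)
    rw [hΩ _ (norm_pos_iff.mp norm_pos), norm_mul_eq, mul_pow]
  have add_eq : t • (I * N) + N = N * (1 + I * t) := by rw [real_smul]; ring
  have sub_eq : t • (I * N) - N = N * (I * t - 1) := by rw [real_smul]; ring
  have norm_sq_eq : ‖t • (I * N)‖ ^ 2 + 1 = 1 + t ^ 2 := by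
    rw [norm_smul, norm_mul, norm_I, hN, one_mul, mul_one, Real.norm_eq_abs, sq_abs, add_comm]
  rw [add_eq, sub_eq, norm_sq_eq, Ω_mul (norm_one_add_I_mul t), Ω_mul (norm_I_mul_sub_one t)]
  ring

end AngularFactor

theorem planar_kernel_CK
    (j : ℕ) (hj : Odd j) (hj1 : 1 ≤ j) :
    (∫ y : ℝ, ((1 + Complex.I * y) ^ j - (Complex.I * y - 1) ^ j)
        / (2 * ((1 + y ^ 2 : ℝ) : ℂ) ^ ((j + 1) / 2))
      = ((-1 : ℂ)) ^ ((j - 1) / 2) * (Real.pi : ℂ)) ∧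
    ∀ (Ω : ℂ → ℂ), (∀ z : ℂ, z ≠ 0 → Ω z = z ^ j / ((‖z‖ : ℝ) : ℂ) ^ j) →
      ∀ N : ℂ, ‖N‖ = 1 →
        ∫ z in {z : ℂ | ∃ t : ℝ, z = t • (Complex.I * N)},
            (Ω (z + N) - Ω (z - N)) / (2 * ((Real.sqrt (‖z‖ ^ 2 + 1) : ℝ) : ℂ))
            ∂μH[1]
          = ((-1 : ℂ)) ^ ((j - 1) / 2) * (Real.pi : ℂ) * N ^ j := by
  obtain ⟨k, rfl⟩ := hj
  have half_succ : (2 * k + 1 + 1) / 2 = k + 1 := by omega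
  have half_pred : (2 * k + 1 - 1) / 2 = k := by omega
  rw [half_succ, half_pred]
  refine ⟨integral_one_add_I_mul_pow_sub_div k, fun Ω hΩ N hN ↦ ?_⟩
  have sqrt_pow (t : ℝ) :
      ((√(1 + t ^ 2) : ℝ) : ℂ) ^ (2 * k + 1 + 1) = ((1 + t ^ 2 : ℝ) : ℂ) ^ (k + 1) := by
    rw [show 2 * k + 1 + 1 = 2 * (k + 1) by ring, pow_mul, ← ofReal_pow,
      Real.sq_sqrt (by positivity)]
  have norm_direction : ‖I * N‖ = 1 := by rw [norm_mul, norm_I, hN, one_mul]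
  simp only [setIntegral_line_hausdorffMeasure norm_direction,
    angular_difference_quotient_eq hΩ hN, sqrt_pow]
  rw [integral_const_mul, integral_one_add_I_mul_pow_sub_div, mul_comm]
end

section
/- Let n ≥ 1 and let K : ℝ^{n+1} → ℝ be an odd kernel satisfying |K(x)| ≤ C/|x|^n for x ≠ 0 and |K(x) − K(x+h)| ≤ C|h|^η/|x|^{n+η} whenever |h| ≤ |x|/2, for some η > 0. Fix b ∈ (0,1). Then there is a constant C' depending only on n, b, η and C such that for every finite signed Radon measure ν on ℝ^{n+1} and all points x ≠ y in ℝ^{n+1}, writing d = |x − y|, one has |T_{bd} ν(y)| ≤ C' ( T_* ν(x) + M_n ν(x) ), where T_ε ν(y) = ∫_{|y−z|>ε} K(y−z) dν(z), T_*ν(x) = sup_{ε>0} |T_ε ν(x)|, and M_n ν(x) = sup_{r>0} |ν|(B(x,r))/r^n. -/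
open MeasureTheory Metric Filter Set
open scoped ENNReal NNReal Topology

noncomputable section

/-- Integral of a real function with respect to a (finite) signed measure,
defined via the Jordan decomposition. -/
def sintegral {α : Type*} [MeasurableSpace α]
    (ν : MeasureTheory.SignedMeasure α) (f : α → ℝ) : ℝ :=
  ∫ x, f x ∂ν.toJordanDecomposition.posPart - ∫ x, f x ∂ν.toJordanDecomposition.negPart

/-- The truncated singular integral `T_ε ν (y) = ∫_{|y-z|>ε} K(y-z) dν(z)`. -/
def Teps {n : ℕ} (K : EuclideanSpace ℝ (Fin (n + 1)) → ℝ)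
    (ν : MeasureTheory.SignedMeasure (EuclideanSpace ℝ (Fin (n + 1)))) (ε : ℝ)
    (y : EuclideanSpace ℝ (Fin (n + 1))) : ℝ :=
  sintegral ν (fun z => if ε < dist y z then K (y - z) else 0)

/-!
Put `d = |x - y|` and compare `T_{bd} ν(y)` with `T_R ν(x)`, where `R = (2 + b) d`. The difference
of the two truncated kernels is dominated by a multiple of `R ^ η / max R |x - z| ^ (n + η)`: for
`|x - z| ≤ R` only the kernel at `y` survives and its size bound applies, and for `|x - z| > R` both
cut-offs are inactive and Hölder regularity gives the decay. Splitting into the dyadic balls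
`B(x, 2 ^ (k + 1) R)`, each of `|ν|`-measure at most `M (2 ^ (k + 1) R) ^ n`, the integral of this
majorant is bounded by a geometric series of ratio `2 ^ (-η)`.
-/

theorem enorm_sintegral_le_lintegral_enorm {α : Type*} [MeasurableSpace α]
    (ν : SignedMeasure α) (f : α → ℝ) :
    ‖sintegral ν f‖ₑ ≤ ∫⁻ x, ‖f x‖ₑ ∂ν.totalVariation := by
  rw [sintegral, SignedMeasure.totalVariation, lintegral_add_measure]
  exact enorm_sub_le.trans
    (add_le_add (enorm_integral_le_lintegral_enorm f) (enorm_integral_le_lintegral_enorm f))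

theorem sintegral_sub {α : Type*} [MeasurableSpace α] {ν : SignedMeasure α} {f g : α → ℝ}
    (hf : Integrable f ν.totalVariation) (hg : Integrable g ν.totalVariation) :
    sintegral ν (f - g) = sintegral ν f - sintegral ν g := by
  obtain ⟨hf_pos, hf_neg⟩ := integrable_add_measure.1 hf
  obtain ⟨hg_pos, hg_neg⟩ := integrable_add_measure.1 hg
  simp only [sintegral, integral_sub' hf_pos hg_pos, integral_sub' hf_neg hg_neg]
  ring

section PolynomialGrowth

variable {X : Type*} [PseudoMetricSpace X]

theorem exists_mem_ball_two_pow_mul {R : ℝ} (hR : 0 < R) (x z : X) :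
    ∃ k : ℕ, z ∈ ball x (2 ^ (k + 1) * R) ∧ 2 ^ k * R ≤ max R (dist x z) := by
  obtain ⟨k, hk_le, hk_lt⟩ := exists_nat_pow_near (x := max R (dist x z) / R) (y := (2 : ℝ))
    ((one_le_div hR).2 (le_max_left _ _)) one_lt_two
  rw [le_div_iff₀ hR] at hk_le
  rw [div_lt_iff₀ hR] at hk_lt
  exact ⟨k, mem_ball'.2 ((le_max_right _ _).trans_lt hk_lt), hk_le⟩

theorem rpow_div_dyadic_mul {R : ℝ} (hR : 0 < R) (s η : ℝ) (k : ℕ) :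
    R ^ η / (2 ^ k * R) ^ (s + η) * (2 ^ (k + 1) * R) ^ s = 2 ^ s * ((2 : ℝ) ^ (-η)) ^ k := by
  have hscale : 2 ^ (k + 1) * R = 2 * (2 ^ k * R) := by ring
  have hpow : ((2 : ℝ) ^ η) ^ k = (2 ^ k) ^ η := by
    rw [← Real.rpow_mul_natCast two_pos.le, mul_comm, Real.rpow_natCast_mul two_pos.le]
  rw [hscale, Real.mul_rpow two_pos.le (by positivity), Real.rpow_add (by positivity),
    Real.mul_rpow (z := η) (by positivity) hR.le, Real.rpow_neg two_pos.le, inv_pow, hpow]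
  field_simp

theorem lintegral_rpow_div_max_rpow_le [MeasurableSpace X] [OpensMeasurableSpace X]
    {μ : Measure X} {x : X} {s η R : ℝ} {M : ℝ≥0∞} (hη : 0 < η) (hsη : 0 ≤ s + η)
    (hR : 0 < R) (hμ : ∀ r : ℝ, 0 < r → μ (ball x r) ≤ M * ENNReal.ofReal (r ^ s)) :
    ∫⁻ z, ENNReal.ofReal (R ^ η / max R (dist x z) ^ (s + η)) ∂μ ≤
      ENNReal.ofReal (2 ^ s / (1 - 2 ^ (-η))) * M := by
  have hq_lt : (2 : ℝ) ^ (-η) < 1 := Real.rpow_lt_one_of_one_lt_of_neg one_lt_two (by linarith)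
  let a : ℕ → ℝ≥0∞ := fun k => ENNReal.ofReal (R ^ η / (2 ^ k * R) ^ (s + η))
  calc ∫⁻ z, ENNReal.ofReal (R ^ η / max R (dist x z) ^ (s + η)) ∂μ
    _ ≤ ∫⁻ z, ∑' k, (ball x (2 ^ (k + 1) * R)).indicator (fun _ => a k) z ∂μ := by
      refine lintegral_mono fun z => ?_
      obtain ⟨k, hz, hk⟩ := exists_mem_ball_two_pow_mul hR x z
      refine le_trans ?_ (ENNReal.le_tsum k)
      rw [indicator_of_mem hz]
      dsimp only [a]
      gcongr
    _ = ∑' k, a k * μ (ball x (2 ^ (k + 1) * R)) := by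
      rw [lintegral_tsum fun k => (measurable_const.indicator measurableSet_ball).aemeasurable]
      simp only [lintegral_indicator_const measurableSet_ball]
    _ ≤ ∑' k, a k * (M * ENNReal.ofReal ((2 ^ (k + 1) * R) ^ s)) := by
      gcongr
      exact hμ _ (by positivity)
    _ = ∑' k, ENNReal.ofReal (2 ^ s * ((2 : ℝ) ^ (-η)) ^ k) * M := by
      congr with k
      rw [mul_left_comm, ← ENNReal.ofReal_mul (by positivity), rpow_div_dyadic_mul hR, mul_comm]
    _ = ENNReal.ofReal (2 ^ s / (1 - 2 ^ (-η))) * M := by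
      rw [ENNReal.tsum_mul_right, ← ENNReal.ofReal_tsum_of_nonneg (fun k => by positivity)
        ((summable_geometric_of_lt_one (by positivity) hq_lt).mul_left _), tsum_mul_left,
        tsum_geometric_of_lt_one (by positivity) hq_lt, div_eq_mul_inv]

end PolynomialGrowth

/-- The size and Hölder regularity conditions of order `s` and exponent `η`, with constant `C`, on
a Calderón–Zygmund convolution kernel. The value `K 0` is unconstrained. -/
structure IsStandardKernel {E : Type*} [NormedAddCommGroup E] (K : E → ℝ) (s C η : ℝ) :
    Prop where
  const_nonneg : 0 ≤ C
  abs_le : ∀ x, x ≠ 0 → |K x| ≤ C / ‖x‖ ^ s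
  abs_sub_le : ∀ x h, x ≠ 0 → ‖h‖ ≤ ‖x‖ / 2 → |K x - K (x + h)| ≤ C * ‖h‖ ^ η / ‖x‖ ^ (s + η)

/-- The integrand of the truncated singular integral at `y`: the kernel `K (y - z)` cut off to
`ε < |y - z|`. -/
def truncatedKernel {E : Type*} [NormedAddCommGroup E] (K : E → ℝ) (ε : ℝ) (y z : E) : ℝ :=
  if ε < dist y z then K (y - z) else 0

/-- The truncated singular integral `T_ε ν (y)` on an arbitrary normed group; on Euclidean space it
unfolds to `Teps`. -/
def truncatedIntegral {E : Type*} [NormedAddCommGroup E] [MeasurableSpace E] (K : E → ℝ)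
    (ν : SignedMeasure E) (ε : ℝ) (y : E) : ℝ :=
  sintegral ν (truncatedKernel K ε y)

namespace IsStandardKernel

variable {E : Type*} [NormedAddCommGroup E] {K : E → ℝ} {s C η ε R : ℝ} {x y : E}

theorem continuousAt (hK : IsStandardKernel K s C η) (hη : 0 < η) (hx : x ≠ 0) :
    ContinuousAt K x := by
  have hmodulus : Tendsto (fun w => C * ‖w - x‖ ^ η / ‖x‖ ^ (s + η)) (𝓝 x) (𝓝 0) := by
    have hcont : Continuous fun w => C * ‖w - x‖ ^ η / ‖x‖ ^ (s + η) :=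
      (((continuous_id.sub continuous_const).norm.rpow_const fun _ => Or.inr hη.le).const_mul
        C).div_const _
    simpa [Real.zero_rpow hη.ne'] using hcont.tendsto x
  refine tendsto_iff_dist_tendsto_zero.2
    (squeeze_zero' (Eventually.of_forall fun _ => dist_nonneg) ?_ hmodulus)
  filter_upwards [ball_mem_nhds x (half_pos (norm_pos_iff.2 hx))] with w hw
  simpa [dist_comm (K w), Real.dist_eq] using
    hK.abs_sub_le x (w - x) hx (mem_ball_iff_norm.1 hw).le

theorem abs_truncatedKernel_le (hK : IsStandardKernel K s C η) (hs : 0 ≤ s) (hε : 0 < ε)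
    (y z : E) : |truncatedKernel K ε y z| ≤ C / ε ^ s := by
  have hC := hK.const_nonneg
  rw [truncatedKernel]
  split_ifs with hz
  · rw [dist_eq_norm] at hz
    refine (hK.abs_le _ (norm_pos_iff.1 (hε.trans hz))).trans ?_
    gcongr
  · rw [abs_zero]
    positivity

theorem abs_truncatedKernel_sub_le (hK : IsStandardKernel K s C η) (hs : 0 ≤ s) (hη : 0 < η)
    (hε : 0 < ε) (hεR : ε + dist x y ≤ R) (hR : 2 * dist x y ≤ R) (z : E) :
    |truncatedKernel K ε y z - truncatedKernel K R x z| ≤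
      C * (R / ε) ^ s * (R ^ η / max R (dist x z) ^ (s + η)) := by
  have hC := hK.const_nonneg
  have hεR' : ε ≤ R := (le_add_of_nonneg_right dist_nonneg).trans hεR
  have hR_pos : 0 < R := hε.trans_le hεR'
  rcases le_or_gt (dist x z) R with hnear | hfar
  · calc |truncatedKernel K ε y z - truncatedKernel K R x z|
      _ = |truncatedKernel K ε y z| := by
        simp only [truncatedKernel, hnear.not_gt, if_false, sub_zero]
      _ ≤ C / ε ^ s := hK.abs_truncatedKernel_le hs hε y z
      _ = C * (R / ε) ^ s * (R ^ η / max R (dist x z) ^ (s + η)) := by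
        rw [max_eq_left hnear, Real.rpow_add hR_pos, Real.div_rpow hR_pos.le hε.le]
        field_simp
  · have hfar_y : ε < dist y z := by linarith [dist_triangle x y z]
    have hxz : x - z ≠ 0 := norm_pos_iff.1 (dist_eq_norm x z ▸ hR_pos.trans hfar)
    have hdist : dist x y ≤ dist x z / 2 := by linarith
    have hreg : |K (x - z) - K (y - z)| ≤ C * dist x y ^ η / dist x z ^ (s + η) := by
      have := hK.abs_sub_le (x - z) (y - x) hxz (by rwa [← dist_eq_norm', ← dist_eq_norm])
      rwa [add_comm (x - z), sub_add_sub_cancel, ← dist_eq_norm', ← dist_eq_norm] at this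
    calc |truncatedKernel K ε y z - truncatedKernel K R x z|
      _ = |K (x - z) - K (y - z)| := by
        simp only [truncatedKernel, hfar, hfar_y, if_true, abs_sub_comm]
      _ ≤ C * 1 * (dist x y ^ η / dist x z ^ (s + η)) := by rwa [mul_one, ← mul_div_assoc]
      _ ≤ C * (R / ε) ^ s * (R ^ η / max R (dist x z) ^ (s + η)) := by
        rw [max_eq_right hfar.le]
        gcongr
        · exact Real.one_le_rpow ((one_le_div hε).2 hεR') hs
        · linarith [dist_nonneg (x := x) (y := y)]

variable [MeasurableSpace E] [BorelSpace E]

theorem measurable (hK : IsStandardKernel K s C η) (hη : 0 < η) : Measurable K :=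
  measurable_of_continuousOn_compl_singleton 0 fun _ hx =>
    (hK.continuousAt hη hx).continuousWithinAt

theorem integrable_truncatedKernel (hK : IsStandardKernel K s C η) (hs : 0 ≤ s) (hη : 0 < η)
    (hε : 0 < ε) (y : E) (μ : Measure E) [IsFiniteMeasure μ] :
    Integrable (truncatedKernel K ε y) μ := by
  have hmeas : Measurable (truncatedKernel K ε y) :=
    Measurable.ite
      (measurableSet_lt measurable_const (continuous_const.dist continuous_id).measurable)
      ((hK.measurable hη).comp (continuous_const.sub continuous_id).measurable) measurable_const
  exact .of_bound hmeas.aestronglyMeasurable (C / ε ^ s)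
    (Eventually.of_forall (hK.abs_truncatedKernel_le hs hε y))

theorem abs_truncatedIntegral_sub_le {ν : SignedMeasure E} {M : ℝ}
    (hK : IsStandardKernel K s C η) (hs : 0 ≤ s) (hη : 0 < η) (hε : 0 < ε)
    (hεR : ε + dist x y ≤ R) (hR : 2 * dist x y ≤ R) (hM : 0 ≤ M)
    (hν : ∀ r : ℝ, 0 < r → ν.totalVariation.real (ball x r) ≤ M * r ^ s) :
    |truncatedIntegral K ν ε y - truncatedIntegral K ν R x| ≤
      C * (R / ε) ^ s * (2 ^ s / (1 - 2 ^ (-η)) * M) := by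
  have hC := hK.const_nonneg
  have hR_pos : 0 < R := by linarith [dist_nonneg (x := x) (y := y)]
  have hq_lt : (2 : ℝ) ^ (-η) < 1 := Real.rpow_lt_one_of_one_lt_of_neg one_lt_two (by linarith)
  have hA : 0 ≤ 2 ^ s / (1 - (2 : ℝ) ^ (-η)) := div_nonneg (by positivity) (by linarith)
  have hgrowth (r : ℝ) (hr : 0 < r) :
      ν.totalVariation (ball x r) ≤ ENNReal.ofReal M * ENNReal.ofReal (r ^ s) := by
    rw [← ENNReal.ofReal_mul hM, ← ofReal_measureReal]
    exact ENNReal.ofReal_le_ofReal (hν r hr)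
  rw [truncatedIntegral, truncatedIntegral,
    ← sintegral_sub (hK.integrable_truncatedKernel hs hη hε y _)
      (hK.integrable_truncatedKernel hs hη hR_pos x _),
    ← ENNReal.ofReal_le_ofReal_iff (by positivity), ← Real.enorm_eq_ofReal_abs]
  calc ‖sintegral ν (truncatedKernel K ε y - truncatedKernel K R x)‖ₑ
    _ ≤ ∫⁻ z, ‖truncatedKernel K ε y z - truncatedKernel K R x z‖ₑ ∂ν.totalVariation :=
      enorm_sintegral_le_lintegral_enorm ν _
    _ ≤ ∫⁻ z, ENNReal.ofReal (C * (R / ε) ^ s) *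
          ENNReal.ofReal (R ^ η / max R (dist x z) ^ (s + η)) ∂ν.totalVariation := by
      refine lintegral_mono fun z => ?_
      rw [Real.enorm_eq_ofReal_abs, ← ENNReal.ofReal_mul (by positivity)]
      exact ENNReal.ofReal_le_ofReal (hK.abs_truncatedKernel_sub_le hs hη hε hεR hR z)
    _ ≤ ENNReal.ofReal (C * (R / ε) ^ s) *
          (ENNReal.ofReal (2 ^ s / (1 - 2 ^ (-η))) * ENNReal.ofReal M) := by
      rw [lintegral_const_mul' _ _ ENNReal.ofReal_ne_top]
      gcongr
      exact lintegral_rpow_div_max_rpow_le hη (by positivity) hR_pos hgrowth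
    _ = ENNReal.ofReal (C * (R / ε) ^ s * (2 ^ s / (1 - 2 ^ (-η)) * M)) := by
      rw [← ENNReal.ofReal_mul hA, ← ENNReal.ofReal_mul (by positivity)]

end IsStandardKernel

theorem truncated_bounded_by_maximal_general {E : Type*} [NormedAddCommGroup E]
    [MeasurableSpace E] [BorelSpace E] {s C η b : ℝ} (hs : 0 ≤ s) (hη : 0 < η) (hb : 0 < b) :
    ∃ C' : ℝ, 0 < C' ∧
      ∀ K : E → ℝ, IsStandardKernel K s C η →
        ∀ (ν : SignedMeasure E) (x y : E), x ≠ y →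
          ∀ T M : ℝ,
            (∀ ε : ℝ, 0 < ε → |truncatedIntegral K ν ε x| ≤ T) →
            (∀ r : ℝ, 0 < r → ν.totalVariation.real (ball x r) ≤ M * r ^ s) →
            |truncatedIntegral K ν (b * dist x y) y| ≤ C' * (T + M) := by
  set A := C * ((2 + b) / b) ^ s * (2 ^ s / (1 - 2 ^ (-η))) with hA
  refine ⟨max 1 A, lt_max_of_lt_left one_pos, fun K hK ν x y hxy T M hT hM => ?_⟩
  have hd : 0 < dist x y := dist_pos.2 hxy
  have hT_nonneg : 0 ≤ T := (abs_nonneg _).trans (hT 1 one_pos)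
  have hM_nonneg : 0 ≤ M := by simpa using measureReal_nonneg.trans (hM 1 one_pos)
  have hratio : (2 + b) * dist x y / (b * dist x y) = (2 + b) / b :=
    mul_div_mul_right _ _ hd.ne'
  have hcompare : |truncatedIntegral K ν (b * dist x y) y -
      truncatedIntegral K ν ((2 + b) * dist x y) x| ≤ A * M := by
    rw [hA, mul_assoc _ _ M, ← hratio]
    exact hK.abs_truncatedIntegral_sub_le hs hη (by positivity) (by linarith)
      (by gcongr; linarith) hM_nonneg hM
  calc |truncatedIntegral K ν (b * dist x y) y|
    _ ≤ |truncatedIntegral K ν ((2 + b) * dist x y) x| + A * M := by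
      linarith [abs_sub_abs_le_abs_sub (truncatedIntegral K ν (b * dist x y) y)
        (truncatedIntegral K ν ((2 + b) * dist x y) x)]
    _ ≤ 1 * T + A * M := by
      rw [one_mul]
      gcongr
      exact hT _ (by positivity)
    _ ≤ max 1 A * T + max 1 A * M := by
      gcongr
      exacts [le_max_left 1 A, le_max_right 1 A]
    _ = max 1 A * (T + M) := (mul_add _ _ _).symm

theorem truncated_bounded_by_maximal
    (n : ℕ) (hn : 1 ≤ n) (C η b : ℝ) (hC : 0 < C) (hη : 0 < η) (hb : b ∈ Set.Ioo (0 : ℝ) 1) :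
    ∃ C' : ℝ, 0 < C' ∧
      ∀ K : EuclideanSpace ℝ (Fin (n + 1)) → ℝ,
        (∀ x : EuclideanSpace ℝ (Fin (n + 1)), K (-x) = -K x) →
        (∀ x : EuclideanSpace ℝ (Fin (n + 1)), x ≠ 0 → |K x| ≤ C / ‖x‖ ^ n) →
        (∀ x h : EuclideanSpace ℝ (Fin (n + 1)), x ≠ 0 → ‖h‖ ≤ ‖x‖ / 2 →
          |K x - K (x + h)| ≤ C * ‖h‖ ^ η / ‖x‖ ^ ((n : ℝ) + η)) →
        ∀ (ν : MeasureTheory.SignedMeasure (EuclideanSpace ℝ (Fin (n + 1))))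
          (x y : EuclideanSpace ℝ (Fin (n + 1))), x ≠ y →
          ∀ T M : ℝ,
            (∀ ε : ℝ, 0 < ε → |Teps K ν ε x| ≤ T) →
            (∀ r : ℝ, 0 < r → (ν.totalVariation (ball x r)).toReal ≤ M * r ^ n) →
            |Teps K ν (b * dist x y) y| ≤ C' * (T + M) := by
  obtain ⟨C', hC', h⟩ := truncated_bounded_by_maximal_general
    (E := EuclideanSpace ℝ (Fin (n + 1))) (s := n) (C := C) n.cast_nonneg hη hb.1
  exact ⟨C', hC', fun K _ hsize hreg ν x y hxy T M hT hM =>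
    h K ⟨hC.le, by simpa using hsize, hreg⟩ ν x y hxy T M hT (by simpa [Measure.real] using hM)⟩
end
end

section
/- Let n ≥ 1 and let E ⊂ ℝ^{n+1} be a closed set that is n-AD-regular: there is c ≥ 1 such that c^{−1} r^n ≤ H^n(E ∩ B(x,r)) ≤ c r^n for all x ∈ E and 0 < r ≤ diam E. Suppose that E has an approximate tangent n-plane at x ∈ E with unit normal u, i.e., for every a ∈ (0,1), lim_{r→0} r^{−n} H^n(E ∩ (X_a(x,u) ∪ X_a(x,−u)) ∩ B(x,r)) = 0. Then this plane is a classical tangent n-plane at x: for every a ∈ (0,1) there exists r₀ > 0 such that E ∩ (X_a(x,u) ∪ X_a(x,−u)) ∩ B(x,r) = ∅ for all 0 < r ≤ r₀. -/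
open MeasureTheory Metric Filter Set
open scoped ENNReal NNReal Topology RealInnerProductSpace

noncomputable section

/-- `E ⊆ ℝ^{n+1}` is `n`-rectifiable: up to an `H^n`-null set it is covered by countably
many Lipschitz images of `ℝ^n`. -/
def Rectifiable (n : ℕ) (E : Set (EuclideanSpace ℝ (Fin (n + 1)))) : Prop :=
  ∃ f : ℕ → EuclideanSpace ℝ (Fin n) → EuclideanSpace ℝ (Fin (n + 1)),
    (∀ k, ∃ L : NNReal, LipschitzWith L (f k)) ∧
    μH[n] (E \ ⋃ k, Set.range (f k)) = 0

/-- `E` has an approximate tangent `n`-plane at `x` with unit normal `u`. -/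
def HasApproxTangentNormal (n : ℕ) (E : Set (EuclideanSpace ℝ (Fin (n + 1))))
    (x u : EuclideanSpace ℝ (Fin (n + 1))) : Prop :=
  ‖u‖ = 1 ∧ ∀ a ∈ Set.Ioo (0 : ℝ) 1,
    Tendsto (fun r : ℝ =>
        μH[n] (E ∩ (cone a x u ∪ cone a x (-u)) ∩ ball x r) / ENNReal.ofReal (r ^ n))
      (𝓝[>] 0) (𝓝 0)

/-! A point `y` of `E` in the cone of aperture `a` is the centre of a ball of radius comparable to
`|y - x|` contained in any given wider cone. Lower regularity puts mass at least comparable to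
`|y - x| ^ n` into this ball, which lies in the ball of radius `2 |y - x|` about `x`. If such points
`y` accumulated at `x`, the part of `E` in the wider cone would not have zero density at `x`. -/

section MetricSpace

variable {X : Type*} [MetricSpace X] [MeasurableSpace X] {μ : Measure X} {s : ℝ} {E : Set X} {x : X}

/-- The lower half of `s`-dimensional Ahlfors–David regularity of `E` with respect to `μ`, with real
exponent `s`. -/
def IsLowerRegular (μ : Measure X) (s : ℝ) (E : Set X) : Prop :=
  ∃ κ > 0, ∀ y ∈ E, ∀ r : ℝ, 0 < r → ENNReal.ofReal r ≤ ediam E →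
    ENNReal.ofReal (κ * r ^ s) ≤ μ (E ∩ ball y r)

/-- The `s`-dimensional density of `E` with respect to `μ` vanishes at `x`. The normalization is
`r ^ s`, without the customary constant. -/
def HasZeroDensityAt (μ : Measure X) (s : ℝ) (E : Set X) (x : X) : Prop :=
  Tendsto (fun r : ℝ => μ (E ∩ ball x r) / ENNReal.ofReal (r ^ s)) (𝓝[>] 0) (𝓝 0)

theorem HasZeroDensityAt.eventually_measure_lt (h : HasZeroDensityAt μ s E x)
    {ε : ℝ} (hε : 0 < ε) :
    ∀ᶠ r in 𝓝[>] (0 : ℝ), μ (E ∩ ball x r) < ENNReal.ofReal (ε * r ^ s) := by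
  filter_upwards [h.eventually_lt_const (ENNReal.ofReal_pos.2 hε), self_mem_nhdsWithin]
    with r hr hr_pos
  have hrs : 0 < r ^ s := Real.rpow_pos_of_pos hr_pos s
  rwa [ENNReal.div_lt_iff (.inl (ENNReal.ofReal_pos.2 hrs).ne') (.inl ENNReal.ofReal_ne_top),
    ← ENNReal.ofReal_mul hε.le] at hr

theorem IsLowerRegular.exists_disjoint_ball (hE : IsLowerRegular μ s E) (hx : x ∈ E)
    {C D : Set X} (hxC : x ∉ C) {t : ℝ} (ht₀ : 0 < t) (ht₁ : t ≤ 1)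
    (hCD : ∀ y ∈ C, ball y (t * dist y x) ⊆ D) (hD : HasZeroDensityAt μ s (E ∩ D) x) :
    ∃ r₀ > 0, Disjoint (E ∩ C) (ball x r₀) := by
  obtain ⟨κ, hκ, hlower⟩ := hE
  have hε : 0 < κ * (t / 2) ^ s := by positivity
  obtain ⟨δ, hδ, hsmall⟩ := mem_nhdsGT_iff_exists_Ioo_subset.1 (hD.eventually_measure_lt hε)
  refine ⟨δ / 2, half_pos hδ, Set.disjoint_left.2 fun y ⟨hyE, hyC⟩ hyδ => ?_⟩
  have hd : 0 < dist y x := dist_pos.2 (ne_of_mem_of_not_mem hyC hxC)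
  have hdiam : ENNReal.ofReal (t * dist y x) ≤ ediam E :=
    calc ENNReal.ofReal (t * dist y x) ≤ ENNReal.ofReal (dist y x) :=
          ENNReal.ofReal_le_ofReal (mul_le_of_le_one_left hd.le ht₁)
      _ = edist y x := (edist_dist y x).symm
      _ ≤ ediam E := edist_le_ediam_of_mem hyE hx
  have hball : ball y (t * dist y x) ⊆ ball x (2 * dist y x) := ball_subset_ball' (by nlinarith)
  have hinter : E ∩ ball y (t * dist y x) ⊆ E ∩ D ∩ ball x (2 * dist y x) := fun z ⟨hzE, hz⟩ =>
    ⟨⟨hzE, hCD y hyC hz⟩, hball hz⟩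
  have hscale : κ * (t / 2) ^ s * (2 * dist y x) ^ s = κ * (t * dist y x) ^ s := by
    rw [mul_assoc, ← Real.mul_rpow (by positivity) (by positivity)]
    ring_nf
  have hupper : μ (E ∩ D ∩ ball x (2 * dist y x)) <
      ENNReal.ofReal (κ * (t / 2) ^ s * (2 * dist y x) ^ s) :=
    hsmall ⟨by positivity, by linarith [mem_ball.1 hyδ]⟩
  exact lt_irrefl _ <|
    calc ENNReal.ofReal (κ * (t * dist y x) ^ s) ≤ μ (E ∩ ball y (t * dist y x)) :=
          hlower y hyE _ (mul_pos ht₀ hd) hdiam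
      _ ≤ μ (E ∩ D ∩ ball x (2 * dist y x)) := measure_mono hinter
      _ < ENNReal.ofReal (κ * (t * dist y x) ^ s) := hscale ▸ hupper

end MetricSpace

section InnerProductSpace

variable {V : Type*} [NormedAddCommGroup V] [InnerProductSpace ℝ V] {a b : ℝ} {x u y : V}

/-- The two-sided open cone with vertex `x`, axis `u` and aperture `a`, which is
`X_a(x,u) ∪ X_a(x,-u)` in the notation of `cone`. -/
def doubleCone (a : ℝ) (x u : V) : Set V :=
  {y | a * ‖y - x‖ < |⟪y - x, u⟫|}

theorem cone_union_cone_neg {n : ℕ} (a : ℝ) (x u : EuclideanSpace ℝ (Fin (n + 1))) :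
    cone a x u ∪ cone a x (-u) = doubleCone a x u := by
  ext y
  simp [cone, doubleCone, lt_abs]

theorem vertex_notMem_doubleCone (a : ℝ) (x u : V) : x ∉ doubleCone a x u := by
  simp [doubleCone]

theorem ball_subset_doubleCone {t : ℝ} (hb : 0 ≤ b) (ht : t * (b + ‖u‖) ≤ a - b)
    (hy : y ∈ doubleCone a x u) : ball y (t * dist y x) ⊆ doubleCone b x u := by
  intro z hz
  have hzy : ‖z - y‖ ≤ t * ‖y - x‖ := by simpa only [dist_eq_norm] using (mem_ball.1 hz).le
  have hsub : z - x = (z - y) + (y - x) := (sub_add_sub_cancel z y x).symm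
  have hnorm : ‖z - x‖ ≤ ‖z - y‖ + ‖y - x‖ := hsub ▸ norm_add_le _ _
  have hinner : |⟪y - x, u⟫| - ‖z - y‖ * ‖u‖ ≤ |⟪z - x, u⟫| := by
    have htri := abs_sub_abs_le_abs_add ⟪y - x, u⟫ ⟪z - y, u⟫
    rw [← inner_add_left, add_comm, ← hsub] at htri
    linarith [abs_real_inner_le_norm (z - y) u]
  have hgap : ‖z - y‖ * (b + ‖u‖) ≤ (a - b) * ‖y - x‖ :=
    calc ‖z - y‖ * (b + ‖u‖) ≤ t * ‖y - x‖ * (b + ‖u‖) := by gcongr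
      _ = t * (b + ‖u‖) * ‖y - x‖ := by ring
      _ ≤ (a - b) * ‖y - x‖ := by gcongr
  calc b * ‖z - x‖ ≤ b * (‖z - y‖ + ‖y - x‖) := by gcongr
    _ ≤ a * ‖y - x‖ - ‖z - y‖ * ‖u‖ := by linarith
    _ < |⟪y - x, u⟫| - ‖z - y‖ * ‖u‖ := sub_lt_sub_right hy _
    _ ≤ |⟪z - x, u⟫| := hinner

theorem approx_tangent_is_classical_on_AD_regular_general [MeasurableSpace V] {μ : Measure V}
    {s : ℝ} {E : Set V} (hE : IsLowerRegular μ s E) (hx : x ∈ E) (hb : 0 ≤ b) (hab : b < a)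
    (hdens : HasZeroDensityAt μ s (E ∩ doubleCone b x u) x) :
    ∃ r₀ > 0, ∀ r ≤ r₀, E ∩ doubleCone a x u ∩ ball x r = ∅ := by
  have hpos : 0 < a + ‖u‖ := by linarith [norm_nonneg u]
  have ht₀ : 0 < (a - b) / (a + ‖u‖) := div_pos (sub_pos.2 hab) hpos
  have ht₁ : (a - b) / (a + ‖u‖) ≤ 1 := (div_le_one hpos).2 (by linarith [norm_nonneg u])
  have ht : (a - b) / (a + ‖u‖) * (b + ‖u‖) ≤ a - b :=
    calc (a - b) / (a + ‖u‖) * (b + ‖u‖) ≤ (a - b) / (a + ‖u‖) * (a + ‖u‖) := by gcongr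
      _ = a - b := div_mul_cancel₀ _ hpos.ne'
  obtain ⟨r₀, hr₀, hdisj⟩ := hE.exists_disjoint_ball hx (vertex_notMem_doubleCone a x u) ht₀ ht₁
    (fun _ => ball_subset_doubleCone hb ht) hdens
  exact ⟨r₀, hr₀, fun r hr => (hdisj.mono_right (ball_subset_ball hr)).inter_eq⟩

end InnerProductSpace

theorem approx_tangent_is_classical_on_AD_regular
    (n : ℕ) (hn : 1 ≤ n)
    (E : Set (EuclideanSpace ℝ (Fin (n + 1)))) (hEc : IsClosed E)
    (c : ℝ) (hc : 1 ≤ c)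
    (hAD : ∀ x ∈ E, ∀ r : ℝ, 0 < r → ENNReal.ofReal r ≤ EMetric.diam E →
      ENNReal.ofReal (c⁻¹ * r ^ n) ≤ μH[n] (E ∩ ball x r) ∧
        μH[n] (E ∩ ball x r) ≤ ENNReal.ofReal (c * r ^ n))
    (x : EuclideanSpace ℝ (Fin (n + 1))) (hx : x ∈ E)
    (u : EuclideanSpace ℝ (Fin (n + 1)))
    (hu : HasApproxTangentNormal n E x u) :
    ∀ a ∈ Set.Ioo (0 : ℝ) 1, ∃ r₀ > 0, ∀ r : ℝ, 0 < r → r ≤ r₀ →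
      E ∩ (cone a x u ∪ cone a x (-u)) ∩ ball x r = ∅ := by
  intro a ⟨ha₀, _⟩
  have hE : IsLowerRegular μH[n] n E :=
    ⟨c⁻¹, by positivity, fun y hy r hr hrE => by simpa using (hAD y hy r hr hrE).1⟩
  have hdens : HasZeroDensityAt μH[n] n (E ∩ doubleCone (a / 2) x u) x := by
    simpa [HasZeroDensityAt, cone_union_cone_neg] using hu.2 (a / 2) ⟨by linarith, by linarith⟩
  obtain ⟨r₀, hr₀, hempty⟩ := approx_tangent_is_classical_on_AD_regular_general hE hx
    (half_pos ha₀).le (half_lt_self ha₀) hdens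
  exact ⟨r₀, hr₀, fun r _ hr => cone_union_cone_neg a x u ▸ hempty r hr⟩
end
end
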